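/- arXiv:2212.12590 — 5 statements merged into one kernel-verified Lean document; each statement's English description precedes it below -/
import Mathlib

section
/- Hardy inequality on hyperboloids: There is a constant C > 0 such that for every smooth function φ on ℝ^{1+3} whose restriction to each hyperboloid H_s is compactly supported with support contained in the interior of the future light cone {r < t}, and for all s ≥ s₀ > 0, one has ‖r^{−1}φ‖_{L²(H_s)} ≤ C Σ_{i=1}^{3} ‖∂̲_iφ‖_{L²(H_s)}. -/
open MeasureTheory Real Set

noncomputable section

namespace WKG

abbrev Pt : Type := ℝ × (Fin 3 → ℝ)
abbrev Fn : Type := Pt → ℝ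

/-- Euclidean radius `r = |x|`. -/
def rad (x : Fin 3 → ℝ) : ℝ := Real.sqrt (∑ i : Fin 3, (x i) ^ 2)

/-- The time coordinate `t = √(s² + |x|²)` parametrizing the hyperboloid `H_s`. -/
def hypT (s : ℝ) (x : Fin 3 → ℝ) : ℝ := Real.sqrt (s ^ 2 + (rad x) ^ 2)

/-- The point of `H_s` over `x ∈ ℝ³`. -/
def pt (s : ℝ) (x : Fin 3 → ℝ) : Pt := (hypT s x, x)

/-- `L²` norm on the hyperboloid `H_s` (with respect to `dx`). -/
def L2H (s : ℝ) (ψ : Fn) : ℝ := Real.sqrt (∫ x : Fin 3 → ℝ, (ψ (pt s x)) ^ 2)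

/-- `L^∞` norm on the hyperboloid `H_s`. -/
def LinfH (s : ℝ) (ψ : Fn) : ℝ := ⨆ x : Fin 3 → ℝ, |ψ (pt s x)|

/-- The coordinate directions of `ℝ^{1+3}`: `e4 0 = ∂_t` direction, `e4 (i+1) = ∂_i`. -/
def e4 : Fin 4 → Pt :=
  fun α => ((if α = 0 then (1 : ℝ) else 0), fun i => if (α : ℕ) = (i : ℕ) + 1 then 1 else 0)

/-- Coordinate partial derivative `∂_α` (`α = 0` is `∂_t`). -/
def pdc (α : Fin 4) (φ : Fn) : Fn := fun p => fderiv ℝ φ p (e4 α)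

/-- The time derivative `∂_t`. -/
def pdT : Fn → Fn := pdc 0

/-- The spatial derivative `∂_i`. -/
def pdX (i : Fin 3) : Fn → Fn := pdc i.succ

/-- Semi-hyperboloidal derivative `∂̲_i = ∂_i + (x_i/t) ∂_t`. -/
def shd (i : Fin 3) (φ : Fn) : Fn := fun p => pdX i φ p + (p.2 i / p.1) * pdT φ p

/-- Radial derivative `∂_r = Σ (x_i/r) ∂_i`. -/
def pdr (φ : Fn) : Fn := fun p => ∑ i : Fin 3, (p.2 i / rad p.2) * pdX i φ p

/-- Bondi derivative `∂_u^B = ∂_t`. -/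
def pduB : Fn → Fn := pdT

/-- Bondi derivative `∂_r^B = ∂_t + ∂_r`. -/
def pdrB (φ : Fn) : Fn := fun p => pdT φ p + pdr φ p

/-- Angular derivative `∇̸_i = ∂_i - (x_i/r) ∂_r`. -/
def ang (i : Fin 3) (φ : Fn) : Fn := fun p => pdX i φ p - (p.2 i / rad p.2) * pdr φ p

/-- Pointwise norm of the angular gradient `|∇̸ φ|`. -/
def angNorm (φ : Fn) : Fn := fun p => Real.sqrt (∑ i : Fin 3, (ang i φ p) ^ 2)

/-- Euclidean Laplacian in `x`. -/
def lap (φ : Fn) : Fn := fun p => ∑ i : Fin 3, pdX i (pdX i φ) p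

/-- Wave operator `□ = -∂_t² + Δ_x`. -/
def box (φ : Fn) : Fn := fun p => - pdT (pdT φ) p + lap φ p

/-- Lorentz boost `L_i = t ∂_i + x_i ∂_t`. -/
def Lb (i : Fin 3) (φ : Fn) : Fn := fun p => p.1 * pdX i φ p + p.2 i * pdT φ p

/-- Optical function `u = t - r`. -/
def uopt : Pt → ℝ := fun p => p.1 - rad p.2

/-- Optical function `ū = t + r`. -/
def ubar : Pt → ℝ := fun p => p.1 + rad p.2

/-- Japanese bracket `⟨f⟩ = (1+f²)^{1/2}`. -/
def jb (f : ℝ) : ℝ := Real.sqrt (1 + f ^ 2)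

def tauM : Pt → ℝ := fun p => jb (uopt p)
def tauP : Pt → ℝ := fun p => jb (ubar p)
def tau0 : Pt → ℝ := fun p => tauM p / tauP p

/-- Multiplication by the conformal weight `r`. -/
def mulr (φ : Fn) : Fn := fun p => rad p.2 * φ p

/-- Multiplication by the conformal weight `s² = t² - r²`. -/
def mulS2 (φ : Fn) : Fn := fun p => (p.1 ^ 2 - (rad p.2) ^ 2) * φ p

/-- Standard hyperboloidal energy norm `E_W`. -/
def EW (s : ℝ) (φ : Fn) : ℝ :=
  L2H s (fun p => (s / p.1) * pdT φ p) + ∑ i : Fin 3, L2H s (shd i φ)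

/-- Hyperboloidal Klein-Gordon energy norm `E_KG`. -/
def EKG (s : ℝ) (ψ : Fn) : ℝ :=
  L2H s (fun p => (s / p.1) * pdT ψ p) + (∑ i : Fin 3, L2H s (shd i ψ)) + L2H s ψ

/-- Weighted hyperboloidal energy norm `E_W^a`. -/
def EWa (a s : ℝ) (φ : Fn) : ℝ :=
  L2H s (fun p => (1 + a * tauP p ^ a * tau0 p ^ (max a (1/2))) * (s / p.1) * pdT φ p)
  + (∑ i : Fin 3, L2H s (fun p => s ^ a * shd i φ p))
  + a * L2H s (fun p => (s ^ a / p.1) * φ p)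

/-- Conformal energy norm `‖rφ‖_{E¹_a}`. -/
def E1 (a s : ℝ) (φ : Fn) : ℝ :=
  L2H s (fun p => (1 + a * tauP p ^ a * tau0 p ^ (max a (1/2))) * (s / p.1)
      * (pduB (mulr φ) p / rad p.2))
  + L2H s (fun p => (1 + a * tauP p ^ a * tau0 p ^ (max a (1/2))) * angNorm φ p)
  + L2H s (fun p => tauP p ^ a * (pdrB (mulr φ) p / rad p.2))
  + L2H s (fun p => tauP p ^ a * (s / p.1) * angNorm φ p)

/-- Conformal energy norm `‖s²φ‖_{E²_a}`. -/
def E2 (a s : ℝ) (φ : Fn) : ℝ :=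
  L2H s (fun p => (1 + s ^ (a - 1) * tauM p) * (s / p.1) * (pduB (mulS2 φ) p / s ^ 2))
  + L2H s (fun p => (1 + s ^ (a - 1) * tauM p) * angNorm φ p)
  + L2H s (fun p => s ^ (a - 1) * tauP p * (pdrB (mulS2 φ) p / s ^ 2))
  + L2H s (fun p => s ^ (a - 1) * tauP p * (s / p.1) * angNorm φ p)

/-- Weighted spacetime source norm `‖F‖_{N^a[s₀,s₁]}`. -/
def NWn (a s0 s1 : ℝ) (F : Fn) : ℝ :=
  ∫ s in s0..s1, L2H s (fun p => tauP p ^ a * (s / p.1) * F p)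

/-- Iterated coordinate derivatives `∂^I`. -/
def applyPd (I : Fin 4 → ℕ) (φ : Fn) : Fn :=
  (pdc 0)^[I 0] ((pdc 1)^[I 1] ((pdc 2)^[I 2] ((pdc 3)^[I 3] φ)))

/-- Iterated Lorentz boosts `L^J`. -/
def applyL (J : Fin 3 → ℕ) (φ : Fn) : Fn :=
  (Lb 0)^[J 0] ((Lb 1)^[J 1] ((Lb 2)^[J 2] φ))

/-- `∂^I L^J φ`. -/
def PL (I : Fin 4 → ℕ) (J : Fin 3 → ℕ) (φ : Fn) : Fn := applyPd I (applyL J φ)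

/-- Sum over all multi-indices `I, J` with `|I| + |J| ≤ k`. -/
def sumIdx (k : ℕ) (f : (Fin 4 → ℕ) → (Fin 3 → ℕ) → ℝ) : ℝ :=
  ∑ I : Fin 4 → Fin (k+1), ∑ J : Fin 3 → Fin (k+1),
    if (∑ α : Fin 4, (I α : ℕ)) + (∑ i : Fin 3, (J i : ℕ)) ≤ k then
      f (fun α => (I α : ℕ)) (fun i => (J i : ℕ)) else 0

def EWk (k : ℕ) (s : ℝ) (φ : Fn) : ℝ := sumIdx k (fun I J => EW s (PL I J φ))
def EWak (a : ℝ) (k : ℕ) (s : ℝ) (φ : Fn) : ℝ := sumIdx k (fun I J => EWa a s (PL I J φ))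
def E1k (a : ℝ) (k : ℕ) (s : ℝ) (φ : Fn) : ℝ := sumIdx k (fun I J => E1 a s (PL I J φ))
def E2k (a : ℝ) (k : ℕ) (s : ℝ) (φ : Fn) : ℝ := sumIdx k (fun I J => E2 a s (PL I J φ))
def EKGk (k : ℕ) (s : ℝ) (ψ : Fn) : ℝ := sumIdx k (fun I J => EKG s (PL I J ψ))
def NWnk (a : ℝ) (k : ℕ) (s0 s1 : ℝ) (F : Fn) : ℝ := sumIdx k (fun I J => NWn a s0 s1 (PL I J F))

/-- The region `K_{[s₀,s₁]} = {s₀² ≤ t² - r² ≤ s₁², r < t - 1}`. -/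
def inSlab (s0 s1 : ℝ) (p : Pt) : Prop :=
  s0 ^ 2 ≤ p.1 ^ 2 - (rad p.2) ^ 2 ∧ p.1 ^ 2 - (rad p.2) ^ 2 ≤ s1 ^ 2 ∧ rad p.2 < p.1 - 1

/-- Support of each hyperboloidal slice contained in `{r ≤ t - 1}`. -/
def suppCond (s0 s1 : ℝ) (φ : Fn) : Prop :=
  ∀ s ∈ Set.Icc s0 s1, ∀ x : Fin 3 → ℝ, hypT s x - 1 < rad x → φ (pt s x) = 0

end WKG

open WKG

/-!
In the coordinate `x` the hyperboloid `H_s` is flat `ℝ³` with Lebesgue measure, and by the chain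
rule `∂̲_i φ` is the ordinary partial derivative `∂_i` of the restriction of `φ` to `H_s`. The claim
is therefore Hardy's inequality in dimension `n = 3`. To avoid the singularity at the origin one
integrates the Euler field `x · ∇` of `|f|² / (|x|² + ε)` by parts, absorbs the cross term by AM-GM,
which gives the constant `2 / (n - 2)` uniformly in `ε`, and lets `ε → 0` with Fatou's lemma.
-/

open Filter Topology Module

section EulerField

variable {E : Type*} [NormedAddCommGroup E] [NormedSpace ℝ E] [FiniteDimensional ℝ E]
  [MeasurableSpace E] [BorelSpace E] (μ : Measure E) [μ.IsAddHaarMeasure]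
  {G : Type*} [NormedAddCommGroup G] [NormedSpace ℝ G]

theorem integral_fderiv_apply_self {g : E → G} (hg : ContDiff ℝ 1 g) (hgc : HasCompactSupport g) :
    ∫ x, fderiv ℝ g x x ∂μ = -(finrank ℝ E : ℝ) • ∫ x, g x ∂μ := by
  let b := Module.finBasis ℝ E
  let c (i) : E →L[ℝ] ℝ := LinearMap.toContinuousLinearMap (b.coord i)
  have fderiv_self (x : E) : fderiv ℝ g x x = ∑ i, c i x • fderiv ℝ g x (b i) := by
    calc fderiv ℝ g x x = fderiv ℝ g x (∑ i, b.repr x i • b i) := by rw [b.sum_repr]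
      _ = ∑ i, c i x • fderiv ℝ g x (b i) := by simp only [map_sum, map_smul]; rfl
  have integrable_g : Integrable g μ := hg.continuous.integrable_of_hasCompactSupport hgc
  have integrable_coord (i) : Integrable (fun x ↦ c i x • fderiv ℝ g x (b i)) μ :=
    ((c i).continuous.smul ((hg.continuous_fderiv one_ne_zero).clm_apply continuous_const))
      |>.integrable_of_hasCompactSupport (hgc.fderiv_apply (𝕜 := ℝ) (b i)).smul_left
  have integral_coord (i) : ∫ x, c i x • fderiv ℝ g x (b i) ∂μ = -∫ x, g x ∂μ := by
    have hci (x : E) : fderiv ℝ (c i) x (b i) = 1 := by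
      rw [(c i).fderiv]; simp [c]
    rw [integral_smul_fderiv_eq_neg_fderiv_smul_of_integrable (by simpa only [hci, one_smul])
      (integrable_coord i) ((c i).continuous.smul hg.continuous
        |>.integrable_of_hasCompactSupport hgc.smul_left)
      (fun x _ ↦ (c i).differentiableAt) (fun x _ ↦ hg.differentiable one_ne_zero x)]
    simp only [hci, one_smul]
  simp only [fderiv_self, integral_finsetSum _ fun i _ ↦ integrable_coord i, integral_coord,
    Finset.sum_const, Finset.card_univ, Fintype.card_fin, smul_neg, neg_smul,
    Nat.cast_smul_eq_nsmul]

end EulerField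

theorem lpNorm_two_eq_sqrt_integral {α F : Type*} [MeasurableSpace α] {μ : Measure α}
    [NormedAddCommGroup F] {f : α → F} (hf : AEStronglyMeasurable f μ) :
    lpNorm f 2 μ = √(∫ x, ‖f x‖ ^ 2 ∂μ) := by
  simp [lpNorm_eq_integral_norm_rpow_toReal two_ne_zero ENNReal.ofNat_ne_top hf, sqrt_eq_rpow]

theorem eLpNorm_two_le_ofReal_mul_of_integral_le {α F G : Type*} [MeasurableSpace α]
    {μ : Measure α} [NormedAddCommGroup F] [NormedAddCommGroup G] {f : α → F} {g : α → G}
    (hf : MemLp f 2 μ) (hg : MemLp g 2 μ) {C : ℝ} (hC : 0 ≤ C)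
    (hfg : ∫ x, ‖f x‖ ^ 2 ∂μ ≤ C ^ 2 * ∫ x, ‖g x‖ ^ 2 ∂μ) :
    eLpNorm f 2 μ ≤ ENNReal.ofReal C * eLpNorm g 2 μ := by
  rw [← ofReal_lpNorm hf, ← ofReal_lpNorm hg, ← ENNReal.ofReal_mul hC,
    lpNorm_two_eq_sqrt_integral hf.1, lpNorm_two_eq_sqrt_integral hg.1]
  apply ENNReal.ofReal_le_ofReal
  calc √(∫ x, ‖f x‖ ^ 2 ∂μ) ≤ √(C ^ 2 * ∫ x, ‖g x‖ ^ 2 ∂μ) := sqrt_le_sqrt hfg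
    _ = C * √(∫ x, ‖g x‖ ^ 2 ∂μ) := by rw [sqrt_mul (sq_nonneg C), sqrt_sq hC]

section Hardy

variable {E : Type*} [NormedAddCommGroup E] [InnerProductSpace ℝ E]
  {F : Type*} [NormedAddCommGroup F] [InnerProductSpace ℝ F] {f : E → F}

theorem fderiv_norm_sq_div_apply_self {x : E} (hf : DifferentiableAt ℝ f x) {ε : ℝ}
    (hq : ‖x‖ ^ 2 + ε ≠ 0) :
    fderiv ℝ (fun y ↦ ‖f y‖ ^ 2 / (‖y‖ ^ 2 + ε)) x x =
      2 * inner ℝ (f x) (fderiv ℝ f x x) / (‖x‖ ^ 2 + ε)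
        - 2 * ‖x‖ ^ 2 * ‖f x‖ ^ 2 / (‖x‖ ^ 2 + ε) ^ 2 := by
  have numerator := hf.hasFDerivAt.norm_sq
  have denominator_inv := (hasDerivAt_inv hq).comp_hasFDerivAt x
    ((hasStrictFDerivAt_norm_sq x).hasFDerivAt.add_const ε)
  have quotient : HasFDerivAt (fun y ↦ ‖f y‖ ^ 2 * (‖y‖ ^ 2 + ε)⁻¹) _ x :=
    numerator.mul denominator_inv
  simp only [div_eq_mul_inv]
  rw [quotient.fderiv]
  simp only [add_apply, smul_apply, neg_smul, neg_apply, ContinuousLinearMap.comp_apply,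
    innerSL_apply_apply, real_inner_self_eq_norm_sq, smul_eq_mul, nsmul_eq_mul, Nat.cast_ofNat]
  ring

theorem neg_fderiv_norm_sq_div_apply_self_le {x : E} (hf : DifferentiableAt ℝ f x) {ε m : ℝ}
    (hε : 0 < ε) (hm : 0 < m) :
    -fderiv ℝ (fun y ↦ ‖f y‖ ^ 2 / (‖y‖ ^ 2 + ε)) x x ≤
      (2 + m / 2) * (‖f x‖ ^ 2 / (‖x‖ ^ 2 + ε)) + 2 / m * ‖fderiv ℝ f x‖ ^ 2 := by
  rw [fderiv_norm_sq_div_apply_self hf (by positivity)]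
  set q := ‖x‖ ^ 2 + ε
  have q_pos : 0 < q := by positivity
  set a := ‖f x‖
  set b := ‖fderiv ℝ f x‖
  set w := ‖x‖ * a / q with hw
  have weight_sq_le : w ^ 2 ≤ a ^ 2 / q := by
    rw [hw, div_pow, div_le_div_iff₀ (by positivity) q_pos]
    nlinarith [mul_nonneg (mul_nonneg hε.le (sq_nonneg a)) q_pos.le]
  have neg_inner_le : -inner ℝ (f x) (fderiv ℝ f x x) ≤ a * (b * ‖x‖) := by
    grw [← (fderiv ℝ f x).le_opNorm x]
    exact neg_le_of_neg_le (neg_le_of_abs_le (abs_real_inner_le_norm _ _))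
  have am_gm : 2 * w * b ≤ m / 2 * w ^ 2 + 2 / m * b ^ 2 := by
    have square : m / 2 * w ^ 2 + 2 / m * b ^ 2 - 2 * w * b = (m * w - 2 * b) ^ 2 / (2 * m) := by
      field_simp
      ring
    linarith [show 0 ≤ (m * w - 2 * b) ^ 2 / (2 * m) by positivity]
  calc -(2 * inner ℝ (f x) (fderiv ℝ f x x) / q - 2 * ‖x‖ ^ 2 * a ^ 2 / q ^ 2)
      = 2 * (-inner ℝ (f x) (fderiv ℝ f x x)) / q + 2 * w ^ 2 := by
        rw [hw, div_pow, mul_neg, neg_div]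
        ring
    _ ≤ 2 * (a * (b * ‖x‖)) / q + 2 * w ^ 2 := by gcongr
    _ = 2 * w * b + 2 * w ^ 2 := by rw [hw]; ring
    _ ≤ m / 2 * w ^ 2 + 2 / m * b ^ 2 + 2 * w ^ 2 := by gcongr
    _ = (2 + m / 2) * w ^ 2 + 2 / m * b ^ 2 := by ring
    _ ≤ (2 + m / 2) * (a ^ 2 / q) + 2 / m * b ^ 2 := by gcongr

variable [FiniteDimensional ℝ E] [MeasurableSpace E] [BorelSpace E] (μ : Measure E)
  [μ.IsAddHaarMeasure]

theorem integral_norm_sq_div_norm_sq_add_le (hE : 2 < finrank ℝ E) (hf : ContDiff ℝ 1 f)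
    (hfc : HasCompactSupport f) {ε : ℝ} (hε : 0 < ε) :
    ∫ x, ‖f x‖ ^ 2 / (‖x‖ ^ 2 + ε) ∂μ ≤
      (2 / (finrank ℝ E - 2 : ℝ)) ^ 2 * ∫ x, ‖fderiv ℝ f x‖ ^ 2 ∂μ := by
  set g : E → ℝ := fun x ↦ ‖f x‖ ^ 2 / (‖x‖ ^ 2 + ε)
  set m : ℝ := finrank ℝ E - 2 with hm
  have m_pos : 0 < m := by rw [hm, sub_pos]; exact_mod_cast hE
  have g_contDiff : ContDiff ℝ 1 g :=
    (hf.norm_sq ℝ).div ((contDiff_norm_sq ℝ).add contDiff_const) fun x ↦ by positivity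
  have g_compact : HasCompactSupport g :=
    hfc.mono fun x hx ↦ by contrapose! hx; simp_all [g]
  have g_integrable : Integrable g μ :=
    g_contDiff.continuous.integrable_of_hasCompactSupport g_compact
  have euler_integrable : Integrable (fun x ↦ fderiv ℝ g x x) μ :=
    ((g_contDiff.continuous_fderiv one_ne_zero).clm_apply
      continuous_id).integrable_of_hasCompactSupport <|
        (g_compact.fderiv ℝ).mono fun x hx ↦ by contrapose! hx; simp_all
  have gradient_integrable : Integrable (fun x ↦ ‖fderiv ℝ f x‖ ^ 2) μ :=
    ((hf.continuous_fderiv one_ne_zero).norm.pow 2).integrable_of_hasCompactSupport <|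
      (hfc.fderiv ℝ).mono fun x hx ↦ by contrapose! hx; simp_all
  have key : (m + 2) * ∫ x, g x ∂μ ≤
      (2 + m / 2) * ∫ x, g x ∂μ + 2 / m * ∫ x, ‖fderiv ℝ f x‖ ^ 2 ∂μ :=
    calc (m + 2) * ∫ x, g x ∂μ = ∫ x, -fderiv ℝ g x x ∂μ := by
          rw [integral_neg, integral_fderiv_apply_self μ g_contDiff g_compact, hm]
          simp
      _ ≤ ∫ x, ((2 + m / 2) * g x + 2 / m * ‖fderiv ℝ f x‖ ^ 2) ∂μ :=
          integral_mono euler_integrable.neg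
            ((g_integrable.const_mul _).add (gradient_integrable.const_mul _))
            fun x ↦ neg_fderiv_norm_sq_div_apply_self_le (hf.differentiable one_ne_zero x) hε m_pos
      _ = _ := by
          rw [integral_add (g_integrable.const_mul _) (gradient_integrable.const_mul _),
            integral_const_mul, integral_const_mul]
  calc ∫ x, g x ∂μ = 2 / m * (m / 2 * ∫ x, g x ∂μ) := by field_simp
    _ ≤ 2 / m * (2 / m * ∫ x, ‖fderiv ℝ f x‖ ^ 2 ∂μ) :=
        mul_le_mul_of_nonneg_left (by linarith) (by positivity)
    _ = (2 / m) ^ 2 * ∫ x, ‖fderiv ℝ f x‖ ^ 2 ∂μ := by ring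

theorem eLpNorm_inv_norm_smul_le_eLpNorm_fderiv (hE : 2 < finrank ℝ E) (hf : ContDiff ℝ 1 f)
    (hfc : HasCompactSupport f) :
    eLpNorm (fun x ↦ ‖x‖⁻¹ • f x) 2 μ ≤
      ENNReal.ofReal (2 / (finrank ℝ E - 2 : ℝ)) * eLpNorm (fderiv ℝ f) 2 μ := by
  have : Nontrivial E := Module.nontrivial_of_finrank_pos (R := ℝ) (by lia)
  let q (n : ℕ) (x : E) : ℝ := ‖x‖ ^ 2 + 1 / ((n : ℝ) + 1)
  have q_pos (n x) : 0 < q n x := by positivity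
  let u (n : ℕ) (x : E) : F := (√(q n x))⁻¹ • f x
  have u_continuous (n) : Continuous (u n) :=
    (Continuous.inv₀ (by fun_prop) fun x ↦ (sqrt_pos.2 (q_pos n x)).ne').smul hf.continuous
  have u_tendsto : ∀ᵐ x ∂μ, Tendsto (fun n ↦ u n x) atTop (𝓝 (‖x‖⁻¹ • f x)) := by
    filter_upwards [Measure.ae_ne μ 0] with x hx
    have q_tendsto : Tendsto (fun n ↦ √(q n x)) atTop (𝓝 ‖x‖) := by
      have h : Tendsto (fun n ↦ q n x) atTop (𝓝 (‖x‖ ^ 2 + 0)) :=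
        tendsto_one_div_add_atTop_nhds_zero_nat.const_add (‖x‖ ^ 2)
      simpa only [add_zero, sqrt_sq (norm_nonneg x)] using h.sqrt
    exact (q_tendsto.inv₀ (norm_ne_zero_iff.2 hx)).smul_const (f x)
  have u_le (n) : eLpNorm (u n) 2 μ ≤
      ENNReal.ofReal (2 / (finrank ℝ E - 2 : ℝ)) * eLpNorm (fderiv ℝ f) 2 μ := by
    have norm_u_sq (x) : ‖u n x‖ ^ 2 = ‖f x‖ ^ 2 / q n x := by
      rw [norm_smul, mul_pow, norm_inv, inv_pow, norm_eq_abs, sq_abs, sq_sqrt (q_pos n x).le,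
        inv_mul_eq_div]
    refine eLpNorm_two_le_ofReal_mul_of_integral_le
      ((u_continuous n).memLp_of_hasCompactSupport hfc.smul_left)
      ((hf.continuous_fderiv one_ne_zero).memLp_of_hasCompactSupport (hfc.fderiv ℝ))
      (div_nonneg zero_le_two (sub_nonneg.2 (by exact_mod_cast hE.le))) ?_
    simpa only [norm_u_sq] using integral_norm_sq_div_norm_sq_add_le μ hE hf hfc (by positivity)
  calc eLpNorm (fun x ↦ ‖x‖⁻¹ • f x) 2 μ
      ≤ atTop.liminf fun n ↦ eLpNorm (u n) 2 μ :=
        Lp.eLpNorm_lim_le_liminf_eLpNorm (fun n ↦ (u_continuous n).aestronglyMeasurable) _ u_tendsto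
    _ ≤ _ := liminf_le_of_le (by isBoundedDefault) fun b hb ↦ by
        obtain ⟨n, hn⟩ := hb.exists
        exact hn.trans (u_le n)

theorem memLp_two_inv_norm_smul (hE : 2 < finrank ℝ E) (hf : ContDiff ℝ 1 f)
    (hfc : HasCompactSupport f) : MemLp (fun x ↦ ‖x‖⁻¹ • f x) 2 μ where
  left := measurable_norm.inv.aestronglyMeasurable.smul hf.continuous.aestronglyMeasurable
  right := (eLpNorm_inv_norm_smul_le_eLpNorm_fderiv μ hE hf hfc).trans_lt <|
    ENNReal.mul_lt_top ENNReal.ofReal_lt_top <|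
      ((hf.continuous_fderiv one_ne_zero).memLp_of_hasCompactSupport (hfc.fderiv ℝ)).2

theorem lpNorm_inv_norm_smul_le_lpNorm_fderiv (hE : 2 < finrank ℝ E) (hf : ContDiff ℝ 1 f)
    (hfc : HasCompactSupport f) :
    lpNorm (fun x ↦ ‖x‖⁻¹ • f x) 2 μ ≤
      2 / (finrank ℝ E - 2 : ℝ) * lpNorm (fderiv ℝ f) 2 μ := by
  have fderiv_memLp : MemLp (fderiv ℝ f) 2 μ :=
    (hf.continuous_fderiv one_ne_zero).memLp_of_hasCompactSupport (hfc.fderiv ℝ)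
  have C_nonneg : 0 ≤ 2 / (finrank ℝ E - 2 : ℝ) :=
    div_nonneg zero_le_two (sub_nonneg.2 (by exact_mod_cast hE.le))
  rw [← toReal_eLpNorm (memLp_two_inv_norm_smul μ hE hf hfc).1, ← toReal_eLpNorm fderiv_memLp.1,
    ← ENNReal.toReal_ofReal_mul _ _ C_nonneg]
  exact ENNReal.toReal_mono (ENNReal.mul_ne_top ENNReal.ofReal_ne_top fderiv_memLp.eLpNorm_ne_top)
    (eLpNorm_inv_norm_smul_le_eLpNorm_fderiv μ hE hf hfc)

end Hardy

section OrthonormalBasis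

variable {ι E G : Type*} [Fintype ι] [NormedAddCommGroup E] [InnerProductSpace ℝ E]
  [NormedAddCommGroup G] [NormedSpace ℝ G] (b : OrthonormalBasis ι ℝ E)

theorem opNorm_le_sum_norm_apply_orthonormalBasis (L : E →L[ℝ] G) : ‖L‖ ≤ ∑ i, ‖L (b i)‖ := by
  refine L.opNorm_le_bound (Finset.sum_nonneg fun i _ ↦ norm_nonneg _) fun x ↦ ?_
  calc ‖L x‖ = ‖∑ i, b.repr x i • L (b i)‖ := by
        simp only [← map_smul, ← map_sum, b.sum_repr]
    _ ≤ ∑ i, ‖b.repr x i‖ * ‖L (b i)‖ := norm_sum_le_of_le _ fun i _ ↦ (norm_smul _ _).le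
    _ ≤ ∑ i, ‖x‖ * ‖L (b i)‖ := by
        gcongr with i
        exact (PiLp.norm_apply_le _ i).trans_eq (b.repr.norm_map x)
    _ = (∑ i, ‖L (b i)‖) * ‖x‖ := by rw [← Finset.mul_sum, mul_comm]

theorem lpNorm_le_sum_lpNorm_apply_orthonormalBasis {α : Type*} [MeasurableSpace α]
    {μ : Measure α} {p : ENNReal} (hp : 1 ≤ p) {L : α → E →L[ℝ] G}
    (hL : ∀ i, MemLp (fun a ↦ L a (b i)) p μ) :
    lpNorm L p μ ≤ ∑ i, lpNorm (fun a ↦ L a (b i)) p μ :=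
  calc lpNorm L p μ ≤ lpNorm (∑ i, fun a ↦ ‖L a (b i)‖) p μ :=
        lpNorm_mono_real (memLp_finsetSum' _ fun i _ ↦ (hL i).norm) fun a ↦ by
          simpa only [Finset.sum_apply] using opNorm_le_sum_norm_apply_orthonormalBasis b (L a)
    _ ≤ ∑ i, lpNorm (fun a ↦ ‖L a (b i)‖) p μ := lpNorm_sum_le (fun i _ ↦ (hL i).norm) hp
    _ = ∑ i, lpNorm (fun a ↦ L a (b i)) p μ :=
        Finset.sum_congr rfl fun i _ ↦ lpNorm_norm (hL i).1 p

end OrthonormalBasis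

namespace WKG

variable {s : ℝ}

/-- The parametrization `x ↦ (√(s² + |x|²), x)` of `H_s`, with `ℝ³` carrying its Euclidean norm
instead of the supremum norm of `Fin 3 → ℝ`. -/
def chart (s : ℝ) (x : EuclideanSpace ℝ (Fin 3)) : Pt := pt s x.ofLp

theorem rad_ofLp (x : EuclideanSpace ℝ (Fin 3)) : rad x.ofLp = ‖x‖ := by
  simp [rad, EuclideanSpace.norm_eq]

theorem hypT_ofLp (s : ℝ) (x : EuclideanSpace ℝ (Fin 3)) : hypT s x.ofLp = √(s ^ 2 + ‖x‖ ^ 2) := by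
  rw [hypT, rad_ofLp]

theorem L2H_eq_lpNorm {ψ : Fn} (hψ : AEStronglyMeasurable (ψ ∘ chart s)) :
    L2H s ψ = lpNorm (ψ ∘ chart s) 2 volume := by
  rw [lpNorm_two_eq_sqrt_integral hψ, L2H, ← (PiLp.volume_preserving_ofLp (Fin 3)).integral_comp
    (MeasurableEquiv.toLp 2 (Fin 3 → ℝ)).symm.measurableEmbedding]
  simp [chart]

theorem chart_eq (s : ℝ) :
    chart s = fun x ↦ (√(s ^ 2 + ‖x‖ ^ 2), PiLp.continuousLinearEquiv 2 ℝ (fun _ ↦ ℝ) x) :=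
  funext fun x ↦ by rw [chart, pt, hypT_ofLp]; rfl

theorem contDiff_chart (hs : s ≠ 0) {n : WithTop ℕ∞} : ContDiff ℝ n (chart s) := by
  rw [chart_eq]
  exact ((contDiff_const.add (contDiff_norm_sq ℝ)).sqrt fun x ↦ by positivity).prodMk
    (ContinuousLinearEquiv.contDiff _)

theorem e4_zero : e4 0 = (1, 0) := by
  ext i <;> simp [e4]

theorem e4_succ (i : Fin 3) : e4 i.succ = (0, Pi.single i 1) := by
  ext j
  · simp [e4]
  · simp only [e4, Pi.single_apply, Fin.val_succ, Nat.add_right_cancel_iff, Fin.val_inj]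
    congr 1
    exact propext eq_comm

theorem fderiv_chart_single (hs : s ≠ 0) (x : EuclideanSpace ℝ (Fin 3)) (i : Fin 3) :
    fderiv ℝ (chart s) x (EuclideanSpace.single i 1) =
      e4 i.succ + (x i / (chart s x).1) • e4 0 := by
  have time : HasFDerivAt (fun y : EuclideanSpace ℝ (Fin 3) ↦ √(s ^ 2 + ‖y‖ ^ 2)) _ x :=
    ((hasStrictFDerivAt_norm_sq x).hasFDerivAt.const_add (s ^ 2)).sqrt (by positivity)
  have space := (PiLp.continuousLinearEquiv 2 ℝ fun _ : Fin 3 ↦ ℝ).hasFDerivAt (x := x)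
  rw [chart_eq, (time.prodMk space).fderiv, e4_zero, e4_succ]
  ext j
  · suffices (√(s ^ 2 + ‖x‖ ^ 2))⁻¹ * 2⁻¹ * (2 * x i) = x i / √(s ^ 2 + ‖x‖ ^ 2) by
      simpa [EuclideanSpace.inner_single_right] using this
    ring
  · simp [Pi.single_apply]

theorem fderiv_comp_chart_single (hs : s ≠ 0) {φ : Fn} {x : EuclideanSpace ℝ (Fin 3)}
    (hφ : DifferentiableAt ℝ φ (chart s x)) (i : Fin 3) :
    fderiv ℝ (φ ∘ chart s) x (EuclideanSpace.single i 1) = shd i φ (chart s x) := by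
  rw [fderiv_comp x hφ ((contDiff_chart hs).differentiable one_ne_zero x),
    ContinuousLinearMap.comp_apply, fderiv_chart_single hs, map_add, map_smul, smul_eq_mul]
  rfl

end WKG

theorem hardy_on_hyperboloids_general {s : ℝ} (hs : s ≠ 0) {φ : Fn}
    (hφ : ∀ x, ContDiffAt ℝ 1 φ (pt s x)) (hc : HasCompactSupport fun x ↦ φ (pt s x)) :
    L2H s (fun p ↦ φ p / rad p.2) ≤ 2 * ∑ i : Fin 3, L2H s (shd i φ) := by
  let f := φ ∘ chart s
  let b := EuclideanSpace.basisFun (Fin 3) ℝ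
  have f_contDiff : ContDiff ℝ 1 f := contDiff_iff_contDiffAt.2 fun x ↦
    (hφ x.ofLp).comp x (contDiff_chart hs).contDiffAt
  have f_compact : HasCompactSupport f :=
    hc.comp_homeomorph (PiLp.homeomorph 2 fun _ : Fin 3 ↦ ℝ)
  have shd_eq (i) : shd i φ ∘ chart s = fun x ↦ fderiv ℝ f x (b i) := funext fun x ↦ by
    rw [EuclideanSpace.basisFun_apply]
    exact (fderiv_comp_chart_single hs ((hφ x.ofLp).differentiableAt one_ne_zero) i).symm
  have quotient_eq : (fun p : Pt ↦ φ p / rad p.2) ∘ chart s = fun x ↦ ‖x‖⁻¹ • f x :=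
    funext fun x ↦ by simp [f, chart, pt, rad_ofLp, div_eq_inv_mul]
  have partial_memLp (i) : MemLp (fun x ↦ fderiv ℝ f x (b i)) 2 :=
    ((f_contDiff.continuous_fderiv one_ne_zero).clm_apply continuous_const)
      |>.memLp_of_hasCompactSupport (f_compact.fderiv_apply (𝕜 := ℝ) (b i))
  have quotient_memLp : MemLp (fun x ↦ ‖x‖⁻¹ • f x) 2 :=
    memLp_two_inv_norm_smul volume (by simp) f_contDiff f_compact
  calc L2H s (fun p ↦ φ p / rad p.2) = lpNorm (fun x ↦ ‖x‖⁻¹ • f x) 2 volume := by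
        rw [L2H_eq_lpNorm (by rw [quotient_eq]; exact quotient_memLp.1), quotient_eq]
    _ ≤ 2 / (finrank ℝ (EuclideanSpace ℝ (Fin 3)) - 2) * lpNorm (fderiv ℝ f) 2 volume :=
        lpNorm_inv_norm_smul_le_lpNorm_fderiv volume (by simp) f_contDiff f_compact
    _ = 2 * lpNorm (fderiv ℝ f) 2 volume := by rw [finrank_euclideanSpace_fin]; norm_num
    _ ≤ 2 * ∑ i, lpNorm (fun x ↦ fderiv ℝ f x (b i)) 2 volume := by
        gcongr
        exact lpNorm_le_sum_lpNorm_apply_orthonormalBasis b one_le_two partial_memLp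
    _ = 2 * ∑ i, L2H s (shd i φ) := by
        congr! 2 with i
        rw [L2H_eq_lpNorm (by rw [shd_eq]; exact (partial_memLp i).1), shd_eq]

/-- Hardy inequality on hyperboloids. -/
theorem hardy_on_hyperboloids :
    ∃ C : ℝ, 0 < C ∧ ∀ φ : Fn, ContDiff ℝ (⊤ : ℕ∞) φ →
      ∀ s0 s : ℝ, 0 < s0 → s0 ≤ s →
        HasCompactSupport (fun x : Fin 3 → ℝ => φ (pt s x)) →
        L2H s (fun p => φ p / rad p.2) ≤ C * ∑ i : Fin 3, L2H s (shd i φ) := by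
  refine ⟨2, two_pos, fun φ hφ s0 s hs0 hs hc ↦ ?_⟩
  exact hardy_on_hyperboloids_general (hs0.trans_le hs).ne'
    (fun _ ↦ (hφ.of_le (by exact_mod_cast le_top)).contDiffAt) hc
end
end

section
/- Equivalence of the Morawetz weight: For every a ∈ [1/2, 1] and every (t,x) with 0 ≤ r < t (r = |x|, u = t − r, ū = t + r), one has the two-sided bound 2·a·r·t^{2a−1} ≤ ū^{2a} − u^{2a} ≤ 2(2^{2a−1} + 1)·a·r·t^{2a−1}. -/
open MeasureTheory Real Set

noncomputable section

open WKG

/-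
The function `τ ↦ τ ^ (2 * a)` is convex on `[0, ∞)` for `a ≥ 1/2`, so its graph lies above each of
its tangent lines. The tangent at `t`, evaluated at `t + r`, gives the lower bound, the increment
from `t - r` to `t` being nonnegative. For the upper bound the tangent at `t + r`, evaluated at `t`,
and the tangent at `t`, evaluated at `t - r`, bound the two increments by the slopes at `t + r`
and at `t`; since `t + r ≤ 2 * t`, the first slope is at most `2 ^ (2 * a - 1)` times the second.
-/

theorem add_mul_sub_le_of_convexOn {S : Set ℝ} {f : ℝ → ℝ} {f' y z : ℝ}
    (hf : ConvexOn ℝ S f) (hy : y ∈ S) (hz : z ∈ S) (hf' : HasDerivAt f f' y) :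
    f y + f' * (z - y) ≤ f z := by
  rcases lt_trichotomy y z with hyz | rfl | hzy
  · have hslope := hf.le_slope_of_hasDerivAt hy hz hyz hf'
    rw [slope_def_field, le_div_iff₀ (sub_pos.2 hyz)] at hslope
    linarith
  · simp
  · have hslope := hf.slope_le_of_hasDerivAt hz hy hzy hf'
    rw [slope_def_field, div_le_iff₀ (sub_pos.2 hzy)] at hslope
    linarith

section RpowIncrements

variable {p r t : ℝ}

theorem rpow_add_mul_sub_le_rpow {y z : ℝ} (hp : 1 ≤ p) (hy : 0 ≤ y) (hz : 0 ≤ z) :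
    y ^ p + p * y ^ (p - 1) * (z - y) ≤ z ^ p :=
  add_mul_sub_le_of_convexOn (convexOn_rpow hp) hy hz (hasDerivAt_rpow_const (.inr hp))

theorem mul_rpow_sub_one_le_add_rpow_sub_sub_rpow (hp : 1 ≤ p) (hr : 0 ≤ r) (hrt : r ≤ t) :
    p * r * t ^ (p - 1) ≤ (t + r) ^ p - (t - r) ^ p := by
  have tangent_at_t : t ^ p + p * t ^ (p - 1) * (t + r - t) ≤ (t + r) ^ p :=
    rpow_add_mul_sub_le_rpow hp (by linarith) (by linarith)
  have inner_le : (t - r) ^ p ≤ t ^ p :=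
    rpow_le_rpow (by linarith) (by linarith) (by linarith)
  linarith

theorem add_rpow_sub_sub_rpow_le_mul_add (hp : 1 ≤ p) (hr : 0 ≤ r) (hrt : r ≤ t) :
    (t + r) ^ p - (t - r) ^ p ≤ p * r * ((t + r) ^ (p - 1) + t ^ (p - 1)) := by
  have tangent_at_add : (t + r) ^ p + p * (t + r) ^ (p - 1) * (t - (t + r)) ≤ t ^ p :=
    rpow_add_mul_sub_le_rpow hp (by linarith) (by linarith)
  have tangent_at_t : t ^ p + p * t ^ (p - 1) * (t - r - t) ≤ (t - r) ^ p :=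
    rpow_add_mul_sub_le_rpow hp (by linarith) (by linarith)
  linarith

theorem add_rpow_le_two_rpow_mul_rpow {q : ℝ} (hq : 0 ≤ q) (hr : 0 ≤ r) (hrt : r ≤ t) :
    (t + r) ^ q ≤ 2 ^ q * t ^ q := by
  have ht : 0 ≤ t := hr.trans hrt
  calc (t + r) ^ q ≤ (2 * t) ^ q := rpow_le_rpow (by positivity) (by linarith) hq
    _ = 2 ^ q * t ^ q := mul_rpow zero_le_two ht

end RpowIncrements

theorem morawetz_weight_equiv_general {a r t : ℝ} (ha : 1 / 2 ≤ a) (hr : 0 ≤ r) (hrt : r ≤ t) :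
    2 * a * r * t ^ (2 * a - 1) ≤ (t + r) ^ (2 * a) - (t - r) ^ (2 * a) ∧
      (t + r) ^ (2 * a) - (t - r) ^ (2 * a) ≤
        2 * ((2 : ℝ) ^ (2 * a - 1) + 1) * a * r * t ^ (2 * a - 1) := by
  have hp : 1 ≤ 2 * a := by linarith
  refine ⟨mul_rpow_sub_one_le_add_rpow_sub_sub_rpow hp hr hrt, ?_⟩
  calc (t + r) ^ (2 * a) - (t - r) ^ (2 * a)
      ≤ 2 * a * r * ((t + r) ^ (2 * a - 1) + t ^ (2 * a - 1)) :=
        add_rpow_sub_sub_rpow_le_mul_add hp hr hrt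
    _ ≤ 2 * a * r * (2 ^ (2 * a - 1) * t ^ (2 * a - 1) + t ^ (2 * a - 1)) := by
        gcongr
        exact add_rpow_le_two_rpow_mul_rpow (by linarith) hr hrt
    _ = 2 * ((2 : ℝ) ^ (2 * a - 1) + 1) * a * r * t ^ (2 * a - 1) := by ring

/-- Two-sided equivalence of the Morawetz weight `ū^{2a} - u^{2a} ≈ a r t^{2a-1}`. -/
theorem morawetz_weight_equiv (a : ℝ) (ha : a ∈ Set.Icc (1/2 : ℝ) 1)
    (t : ℝ) (x : Fin 3 → ℝ) (h : rad x < t) :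
    2 * a * rad x * t ^ (2*a - 1) ≤ (t + rad x) ^ (2*a) - (t - rad x) ^ (2*a)
    ∧ (t + rad x) ^ (2*a) - (t - rad x) ^ (2*a)
        ≤ 2 * ((2:ℝ) ^ (2*a - 1) + 1) * a * rad x * t ^ (2*a - 1) :=
  morawetz_weight_equiv_general ha.1 (sqrt_nonneg _) h.le
end
end

section
/- Scalar weight inequality: For every a ∈ [1/2, 1] and every ω ∈ [0, 1), the function g(ω) = (1+ω)^{2a} − (1−ω)^{2a} satisfies 2aω ≤ g(ω) ≤ 2a(2^{2a−1} + 1)ω. -/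
open MeasureTheory Real Set

noncomputable section

/-!
The graph of the convex function `t ↦ t ^ p`, `p = 2a`, lies above its tangents. Its tangent at `1`,
evaluated at `1 + ω`, gives the lower bound because `(1 - ω) ^ p ≤ 1`. The slopes at the right
endpoints of `[1 - ω, 1]` and `[1, 1 + ω]`, namely `p` and `p (1 + ω) ^ (p - 1) ≤ p 2 ^ (p - 1)`,
bound the increments over these intervals and produce the two summands of the upper bound.
-/

lemma mul_sub_le_sub_of_convexOn_of_hasDerivAt {s : Set ℝ} {f : ℝ → ℝ} {f' x y : ℝ}
    (hf : ConvexOn ℝ s f) (hx : x ∈ s) (hy : y ∈ s) (hf' : HasDerivAt f f' x) :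
    f' * (y - x) ≤ f y - f x := by
  rcases lt_trichotomy x y with hxy | rfl | hyx
  · have hslope := hf.le_slope_of_hasDerivAt hx hy hxy hf'
    rwa [slope_def_field, le_div_iff₀ (sub_pos.2 hxy)] at hslope
  · simp
  · have hslope := hf.slope_le_of_hasDerivAt hy hx hyx hf'
    rw [slope_def_field, div_le_iff₀ (sub_pos.2 hyx)] at hslope
    linarith

lemma mul_rpow_sub_one_mul_sub_le_rpow_sub_rpow {p x y : ℝ} (hp : 1 ≤ p) (hx : 0 ≤ x)
    (hy : 0 ≤ y) : p * x ^ (p - 1) * (y - x) ≤ y ^ p - x ^ p :=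
  mul_sub_le_sub_of_convexOn_of_hasDerivAt (convexOn_rpow hp) hx hy
    (hasDerivAt_rpow_const (.inr hp))

lemma mul_le_one_add_rpow_sub_one_sub_rpow {p ω : ℝ} (hp : 1 ≤ p) (hω : ω ∈ Icc 0 1) :
    p * ω ≤ (1 + ω) ^ p - (1 - ω) ^ p := by
  obtain ⟨hω₀, hω₁⟩ := hω
  have tangent_one : 1 + p * ω ≤ (1 + ω) ^ p :=
    one_add_mul_self_le_rpow_one_add (by linarith) hp
  have one_sub_rpow_le : (1 - ω) ^ p ≤ 1 :=
    rpow_le_one (by linarith) (by linarith) (by linarith)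
  linarith

lemma one_add_rpow_sub_one_sub_rpow_le {p ω : ℝ} (hp : 1 ≤ p) (hω : ω ∈ Icc 0 1) :
    (1 + ω) ^ p - (1 - ω) ^ p ≤ p * (2 ^ (p - 1) + 1) * ω := by
  obtain ⟨hω₀, hω₁⟩ := hω
  have tangent_one : 1 - p * ω ≤ (1 - ω) ^ p := by
    simpa [← sub_eq_add_neg] using
      one_add_mul_self_le_rpow_one_add (neg_le_neg hω₁) hp
  have tangent_one_add : (1 + ω) ^ p - 1 ≤ p * (1 + ω) ^ (p - 1) * ω := by
    have := mul_rpow_sub_one_mul_sub_le_rpow_sub_rpow hp (add_nonneg zero_le_one hω₀) zero_le_one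
    rw [one_rpow] at this
    linarith
  calc (1 + ω) ^ p - (1 - ω) ^ p
      ≤ p * (1 + ω) ^ (p - 1) * ω + p * ω := by linarith
    _ ≤ p * 2 ^ (p - 1) * ω + p * ω := by
      gcongr
      linarith
    _ = p * (2 ^ (p - 1) + 1) * ω := by ring

theorem scalar_weight_inequality_general {p ω : ℝ} (hp : 1 ≤ p) (hω : ω ∈ Icc 0 1) :
    p * ω ≤ (1 + ω) ^ p - (1 - ω) ^ p ∧
      (1 + ω) ^ p - (1 - ω) ^ p ≤ p * (2 ^ (p - 1) + 1) * ω :=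
  ⟨mul_le_one_add_rpow_sub_one_sub_rpow hp hω, one_add_rpow_sub_one_sub_rpow_le hp hω⟩

/-- Scalar weight inequality `2aω ≤ (1+ω)^{2a} - (1-ω)^{2a} ≤ 2a(2^{2a-1}+1)ω`. -/
theorem scalar_weight_inequality (a ω : ℝ) (ha : a ∈ Set.Icc (1/2 : ℝ) 1)
    (hω : ω ∈ Set.Ico (0:ℝ) 1) :
    2 * a * ω ≤ (1 + ω) ^ (2*a) - (1 - ω) ^ (2*a)
    ∧ (1 + ω) ^ (2*a) - (1 - ω) ^ (2*a) ≤ 2 * a * ((2:ℝ) ^ (2*a - 1) + 1) * ω :=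
  scalar_weight_inequality_general (by linarith [ha.1]) (Ico_subset_Icc_self hω)
end
end

section
/- Weighted Sobolev estimate on hyperboloids: Let a ≥ 0. There is a constant C > 0 such that for every s ≥ s₀ > 1 and every smooth function φ on ℝ^{1+3} whose restriction to each hyperboloid H_s is compactly supported with support contained in the interior of the future light cone {r < t}, one has ‖s^a τ₊^{1/2} φ‖_{L^∞(H_s)} ≤ C Σ_{|J|≤2} ‖(s^a/t) L^J φ‖_{L²(H_s)}, where ‖ψ‖_{L^∞(H_s)} is the supremum of |ψ(√(s²+|x|²),x)| over x ∈ ℝ³ and the sum is over compositions L^J of at most two Lorentz boosts. -/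
open MeasureTheory Real Set

noncomputable section

open WKG

/-!
On `H_s`, in the coordinates `x`, the boost `L_i` is `t ∂_i`, and `t` is comparable to `t₀ = t(x₀)`
on the ball `B` of radius `t₀ / 4` around `x₀`. Hence on `B` the derivatives of `φ` up to order two,
measured at the length scale `t₀ / 4`, are bounded by the functions `L^J φ` with `|J| ≤ 2`.

It remains to bound `φ (x₀)` by the normalized `L²` norm over `B` of these derivatives. Along a
segment from `x₀` to a point `x₀ + y` of the closed ball, Taylor's formula for `(1 - r) ^ 2 φ`
reads `φ (x₀) = ∫₀¹ r ∂_r² [(1 - r) ^ 2 φ (x₀ + r y)] dr`. Averaging over `y`, the slice at `r`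
becomes an average over the ball shrunk by the factor `r`, which Cauchy–Schwarz bounds by
`r ^ (-n / 2)` times the normalized `L²` norm over `B`, where `n` is the dimension; the remaining
integral of `r ^ (1 - n / 2)` converges for `n < 4`.
-/

section LocalSobolev

open Module Metric
open scoped Pointwise

variable {E F : Type*} [NormedAddCommGroup E] [NormedSpace ℝ E] [NormedAddCommGroup F]
  [NormedSpace ℝ F]

theorem apply_zero_eq_integral_smul_of_vanish_at_one [CompleteSpace F] {g g' g'' : ℝ → F}
    (hg : ∀ r, HasDerivAt g (g' r) r) (hg' : ∀ r, HasDerivAt g' (g'' r) r)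
    (hg'' : Continuous g'') (h1 : g 1 = 0) (h1' : g' 1 = 0) :
    g 0 = ∫ r in (0 : ℝ)..1, r • g'' r := by
  have primitive : ∀ r ∈ uIcc (0 : ℝ) 1, HasDerivAt (fun r => r • g' r - g r) (r • g'' r) r := by
    intro r _
    refine (((hasDerivAt_id r).smul (hg' r)).sub (hg r)).congr_deriv ?_
    simp only [id, one_smul, add_sub_cancel_right]
  rw [intervalIntegral.integral_eq_sub_of_hasDerivAt primitive
    (Continuous.intervalIntegrable (by fun_prop) _ _)]
  simp [h1, h1']

-- The integrand is `r` times the second derivative of `(1 - r) ^ 2 • h r`; the cutoff removes the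
-- boundary terms at `r = 1`.
theorem apply_zero_eq_integral_smul_cutoff [CompleteSpace F] {h h' h'' : ℝ → F}
    (hh : ∀ r, HasDerivAt h (h' r) r) (hh' : ∀ r, HasDerivAt h' (h'' r) r)
    (hh'' : Continuous h'') :
    h 0 = ∫ r in (0 : ℝ)..1,
      r • ((2 : ℝ) • h r - (4 * (1 - r)) • h' r + (1 - r) ^ 2 • h'' r) := by
  have cont : Continuous h := continuous_iff_continuousAt.2 fun r => (hh r).continuousAt
  have cont' : Continuous h' := continuous_iff_continuousAt.2 fun r => (hh' r).continuousAt
  have lin (r : ℝ) : HasDerivAt (fun r : ℝ => 1 - r) (-1) r := by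
    simpa using (hasDerivAt_id r).const_sub 1
  have cutoff (r : ℝ) : HasDerivAt (fun r : ℝ => (1 - r) ^ 2) (-2 * (1 - r)) r := by
    refine ((lin r).fun_pow 2).congr_deriv ?_
    ring
  have deriv₁ (r : ℝ) : HasDerivAt (fun r => (1 - r) ^ 2 • h r)
      ((1 - r) ^ 2 • h' r + (-2 * (1 - r)) • h r) r := (cutoff r).smul (hh r)
  have deriv₂ (r : ℝ) : HasDerivAt (fun r => (1 - r) ^ 2 • h' r + (-2 * (1 - r)) • h r)
      ((2 : ℝ) • h r - (4 * (1 - r)) • h' r + (1 - r) ^ 2 • h'' r) r := by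
    refine (((cutoff r).smul (hh' r)).add (((lin r).const_mul (-2)).smul (hh r))).congr_deriv ?_
    module
  simpa using apply_zero_eq_integral_smul_of_vanish_at_one deriv₁ deriv₂ (by fun_prop)
    (by simp) (by simp)

theorem norm_le_integral_mul_norm_derivs [CompleteSpace F] {h h' h'' : ℝ → F}
    (hh : ∀ r, HasDerivAt h (h' r) r) (hh' : ∀ r, HasDerivAt h' (h'' r) r)
    (hh'' : Continuous h'') :
    ‖h 0‖ ≤ ∫ r in (0 : ℝ)..1, r * (2 * ‖h r‖ + 4 * ‖h' r‖ + ‖h'' r‖) := by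
  have cont : Continuous h := continuous_iff_continuousAt.2 fun r => (hh r).continuousAt
  have cont' : Continuous h' := continuous_iff_continuousAt.2 fun r => (hh' r).continuousAt
  rw [apply_zero_eq_integral_smul_cutoff hh hh' hh'']
  refine intervalIntegral.norm_integral_le_of_norm_le zero_le_one (ae_of_all _ fun r hr => ?_)
    (Continuous.intervalIntegrable (by fun_prop) _ _)
  obtain ⟨r_pos, r_le⟩ := hr
  have weight₁ : ‖4 * (1 - r)‖ ≤ 4 := by rw [Real.norm_of_nonneg] <;> linarith
  have weight₂ : ‖(1 - r) ^ 2‖ ≤ 1 := by rw [Real.norm_of_nonneg] <;> nlinarith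
  rw [norm_smul, Real.norm_of_nonneg r_pos.le]
  gcongr
  calc ‖(2 : ℝ) • h r - (4 * (1 - r)) • h' r + (1 - r) ^ 2 • h'' r‖
      ≤ ‖(2 : ℝ) • h r‖ + ‖(4 * (1 - r)) • h' r‖ + ‖(1 - r) ^ 2 • h'' r‖ :=
        (norm_add_le _ _).trans (by gcongr; exact norm_sub_le _ _)
    _ = 2 * ‖h r‖ + ‖4 * (1 - r)‖ * ‖h' r‖ + ‖(1 - r) ^ 2‖ * ‖h'' r‖ := by
        simp only [norm_smul, Real.norm_two]
    _ ≤ 2 * ‖h r‖ + 4 * ‖h' r‖ + 1 * ‖h'' r‖ := by gcongr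
    _ = 2 * ‖h r‖ + 4 * ‖h' r‖ + ‖h'' r‖ := by rw [one_mul]

/-- The size of the second-order jet of `f` at `x` on the length scale `δ`. The weights are those
produced by differentiating the cutoff `(1 - r) ^ 2` along a segment of length `δ`. -/
def scaledJetNorm (δ : ℝ) (f : E → F) (x : E) : ℝ :=
  2 * ‖f x‖ + 4 * δ * ‖fderiv ℝ f x‖ + δ ^ 2 * ‖fderiv ℝ (fderiv ℝ f) x‖

theorem continuous_scaledJetNorm (δ : ℝ) {f : E → F} (hf : ContDiff ℝ 2 f) :
    Continuous (scaledJetNorm δ f) := by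
  have hf' : ContDiff ℝ 1 (fderiv ℝ f) := hf.fderiv_right le_rfl
  exact ((hf.continuous.norm.const_mul 2).add (hf'.continuous.norm.const_mul _)).add
    ((hf'.continuous_fderiv one_ne_zero).norm.const_mul _)

theorem norm_le_integral_mul_scaledJetNorm [CompleteSpace F] {f : E → F} (hf : ContDiff ℝ 2 f)
    (x₀ : E) {y : E} {δ : ℝ} (hy : ‖y‖ ≤ δ) :
    ‖f x₀‖ ≤ ∫ r in (0 : ℝ)..1, r * scaledJetNorm δ f (x₀ + r • y) := by
  have hf' : ContDiff ℝ 1 (fderiv ℝ f) := hf.fderiv_right le_rfl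
  have cont_jet : Continuous (scaledJetNorm δ f) := continuous_scaledJetNorm δ hf
  have segment (r : ℝ) : HasDerivAt (fun r : ℝ => x₀ + r • y) y r := by
    simpa using ((hasDerivAt_id r).smul_const y).const_add x₀
  have deriv₁ (r : ℝ) : HasDerivAt (fun r : ℝ => f (x₀ + r • y)) (fderiv ℝ f (x₀ + r • y) y) r :=
    (hf.differentiable two_ne_zero _).hasFDerivAt.comp_hasDerivAt r (segment r)
  have deriv₂ (r : ℝ) : HasDerivAt (fun r : ℝ => fderiv ℝ f (x₀ + r • y) y)
      (fderiv ℝ (fderiv ℝ f) (x₀ + r • y) y y) r := by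
    simpa using ((hf'.differentiable one_ne_zero _).hasFDerivAt.comp_hasDerivAt r
      (segment r)).clm_apply (hasDerivAt_const r y)
  have on_segment := norm_le_integral_mul_norm_derivs deriv₁ deriv₂ (by fun_prop)
  rw [zero_smul, add_zero] at on_segment
  refine on_segment.trans (intervalIntegral.integral_mono_on zero_le_one
    (Continuous.intervalIntegrable (by fun_prop) _ _)
    (Continuous.intervalIntegrable (by fun_prop) _ _) fun r hr => ?_)
  have bound₁ : ‖fderiv ℝ f (x₀ + r • y) y‖ ≤ ‖fderiv ℝ f (x₀ + r • y)‖ * δ :=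
    (fderiv ℝ f (x₀ + r • y)).le_opNorm_of_le hy
  have bound₂ : ‖fderiv ℝ (fderiv ℝ f) (x₀ + r • y) y y‖
      ≤ ‖fderiv ℝ (fderiv ℝ f) (x₀ + r • y)‖ * δ * δ :=
    (fderiv ℝ (fderiv ℝ f) (x₀ + r • y)).le_of_opNorm₂_le_of_le le_rfl hy hy
  refine mul_le_mul_of_nonneg_left ?_ hr.1
  unfold scaledJetNorm
  linarith

variable [FiniteDimensional ℝ E] [MeasurableSpace E] [BorelSpace E] (μ : Measure E)
  [μ.IsAddHaarMeasure]

theorem measureReal_closedBall_mul (x : E) {r : ℝ} (hr : 0 < r) (δ : ℝ) :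
    μ.real (closedBall x (r * δ)) = r ^ finrank ℝ E * μ.real (closedBall x δ) := by
  rw [measureReal_def, Measure.addHaar_closedBall_mul_of_pos _ _ hr, ENNReal.toReal_mul,
    ENNReal.toReal_ofReal (by positivity), ← measureReal_def,
    Measure.addHaar_real_closedBall_center μ x]

theorem average_closedBall_comp_add_smul (g : E → F) (x₀ : E) {r δ : ℝ} (hr : 0 < r)
    (hδ : 0 ≤ δ) :
    ⨍ y in closedBall 0 δ, g (x₀ + r • y) ∂μ = ⨍ x in closedBall x₀ (r * δ), g x ∂μ := by
  have smul_ball : r • closedBall (0 : E) δ = closedBall 0 (r * δ) := by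
    rw [smul_closedBall _ _ hδ, smul_zero, Real.norm_of_nonneg hr.le]
  have preimage_ball : (x₀ + ·) ⁻¹' closedBall x₀ (r * δ) = closedBall 0 (r * δ) := by
    rw [preimage_add_closedBall, sub_self]
  have translate : ∫ y in closedBall 0 (r * δ), g (x₀ + y) ∂μ
      = ∫ x in closedBall x₀ (r * δ), g x ∂μ := by
    rw [← preimage_ball]
    exact (measurePreserving_add_left μ x₀).setIntegral_preimage_emb
      (MeasurableEquiv.addLeft x₀).measurableEmbedding g _
  rw [setAverage_eq, setAverage_eq,
    Measure.setIntegral_comp_smul_of_pos μ (fun y => g (x₀ + y)) _ hr, smul_ball, translate,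
    measureReal_closedBall_mul μ x₀ hr, Measure.addHaar_real_closedBall_center μ x₀, smul_smul,
    mul_inv, mul_comm]

theorem average_sq_closedBall_mul_le {g : E → ℝ} (hg : Continuous g) (x₀ : E) {r δ : ℝ}
    (hr : 0 < r) (hr1 : r ≤ 1) (hδ : 0 ≤ δ) :
    ⨍ x in closedBall x₀ (r * δ), g x ^ 2 ∂μ
      ≤ (r ^ finrank ℝ E)⁻¹ * ⨍ x in closedBall x₀ δ, g x ^ 2 ∂μ := by
  have mono : ∫ x in closedBall x₀ (r * δ), g x ^ 2 ∂μ ≤ ∫ x in closedBall x₀ δ, g x ^ 2 ∂μ :=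
    setIntegral_mono_set
      ((hg.pow 2).continuousOn.integrableOn_compact (isCompact_closedBall x₀ δ))
      (ae_of_all _ fun x => sq_nonneg (g x))
      (closedBall_subset_closedBall (mul_le_of_le_one_left hδ hr1)).eventuallyLE
  rw [setAverage_eq, setAverage_eq, measureReal_closedBall_mul μ x₀ hr, smul_eq_mul, smul_eq_mul,
    mul_inv, mul_assoc]
  gcongr

theorem sq_average_closedBall_le {g : E → ℝ} (hg : Continuous g) (x₀ : E) {δ : ℝ} (hδ : 0 < δ) :
    (⨍ x in closedBall x₀ δ, g x ∂μ) ^ 2 ≤ ⨍ x in closedBall x₀ δ, g x ^ 2 ∂μ :=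
  even_two.convexOn_pow.map_set_average_le (by fun_prop) isClosed_univ
    (measure_closedBall_pos μ x₀ hδ).ne' measure_closedBall_lt_top.ne (by simp)
    (hg.continuousOn.integrableOn_compact (isCompact_closedBall x₀ δ))
    ((hg.pow 2).continuousOn.integrableOn_compact (isCompact_closedBall x₀ δ))

theorem mul_average_closedBall_comp_add_smul_le {g : E → ℝ} (hg : Continuous g) (x₀ : E)
    {r δ : ℝ} (hr : 0 < r) (hr1 : r ≤ 1) (hδ : 0 < δ) :
    r * ⨍ y in closedBall 0 δ, g (x₀ + r • y) ∂μ
      ≤ r ^ (1 - finrank ℝ E / 2 : ℝ) * √(⨍ x in closedBall x₀ δ, g x ^ 2 ∂μ) := by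
  have dilate : √((r ^ finrank ℝ E)⁻¹) = r ^ (-(finrank ℝ E / 2) : ℝ) := by
    rw [Real.sqrt_eq_rpow, ← Real.rpow_natCast, ← Real.rpow_neg hr.le, ← Real.rpow_mul hr.le]
    ring_nf
  rw [average_closedBall_comp_add_smul μ g x₀ hr hδ.le, sub_eq_add_neg, Real.rpow_add hr,
    Real.rpow_one, mul_assoc, ← dilate, ← Real.sqrt_mul (by positivity)]
  gcongr
  exact Real.le_sqrt_of_sq_le ((sq_average_closedBall_le μ hg x₀ (by positivity)).trans
    (average_sq_closedBall_mul_le μ hg x₀ hr hr1 hδ.le))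

theorem average_closedBall_integral_swap {g : ℝ → E → ℝ} (hg : Continuous (Function.uncurry g))
    (x₀ : E) (δ : ℝ) :
    ⨍ y in closedBall x₀ δ, (∫ r in (0 : ℝ)..1, g r y) ∂μ
      = ∫ r in (0 : ℝ)..1, ⨍ y in closedBall x₀ δ, g r y ∂μ := by
  have integrable : Integrable (Function.uncurry g)
      ((volume.restrict (uIoc 0 1)).prod (μ.restrict (closedBall x₀ δ))) := by
    rw [Measure.prod_restrict, uIoc_of_le zero_le_one]
    exact (hg.continuousOn.integrableOn_compact
      (isCompact_Icc.prod (isCompact_closedBall x₀ δ))).mono_set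
        (prod_mono Ioc_subset_Icc_self le_rfl)
  simp only [setAverage_eq, smul_eq_mul, intervalIntegral.integral_const_mul]
  rw [intervalIntegral_integral_swap integrable]

theorem average_closedBall_integral_mul_le {g : E → ℝ} (hg : Continuous g)
    (hdim : finrank ℝ E < 4) (x₀ : E) {δ : ℝ} (hδ : 0 < δ) :
    ⨍ y in closedBall 0 δ, (∫ r in (0 : ℝ)..1, r * g (x₀ + r • y)) ∂μ
      ≤ 2 / (4 - finrank ℝ E) * √(⨍ x in closedBall x₀ δ, g x ^ 2 ∂μ) := by
  have hdim' : (finrank ℝ E : ℝ) < 4 := by exact_mod_cast hdim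
  have exponent : (-1 : ℝ) < 1 - finrank ℝ E / 2 := by linarith
  have jointly_cont : Continuous (Function.uncurry fun (r : ℝ) y => r * g (x₀ + r • y)) := by
    fun_prop
  have cont : Continuous fun r : ℝ => ⨍ y in closedBall 0 δ, r * g (x₀ + r • y) ∂μ := by
    simp only [setAverage_eq]
    exact (continuous_parametric_integral_of_continuous (μ := μ) jointly_cont
      (isCompact_closedBall 0 δ)).const_mul _
  have power_integral : ∫ r in (0 : ℝ)..1, r ^ (1 - finrank ℝ E / 2 : ℝ)
      = 2 / (4 - finrank ℝ E) := by
    rw [integral_rpow (Or.inl exponent), Real.one_rpow, Real.zero_rpow (by linarith)]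
    field_simp
    ring
  rw [average_closedBall_integral_swap μ jointly_cont, ← power_integral,
    ← intervalIntegral.integral_mul_const]
  refine intervalIntegral.integral_mono_on_of_le_Ioo zero_le_one (cont.intervalIntegrable _ _)
    ((intervalIntegral.intervalIntegrable_rpow' exponent).mul_const _) fun r hr => ?_
  rw [setAverage_eq, integral_const_mul, smul_eq_mul, mul_left_comm, ← smul_eq_mul (μ.real _)⁻¹,
    ← setAverage_eq]
  exact mul_average_closedBall_comp_add_smul_le μ hg x₀ hr.1 hr.2.le hδ

theorem norm_le_sqrt_average_closedBall [CompleteSpace F] {f : E → F} (hf : ContDiff ℝ 2 f)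
    (hdim : finrank ℝ E < 4) (x₀ : E) {δ : ℝ} (hδ : 0 < δ) :
    ‖f x₀‖ ≤ 2 / (4 - finrank ℝ E) * √(⨍ x in closedBall x₀ δ, scaledJetNorm δ f x ^ 2 ∂μ) := by
  have cont_jet : Continuous (scaledJetNorm δ f) := continuous_scaledJetNorm δ hf
  have cont_rays : Continuous fun y =>
      ∫ r in (0 : ℝ)..1, r * scaledJetNorm δ f (x₀ + r • y) :=
    intervalIntegral.continuous_parametric_intervalIntegral_of_continuous' (by fun_prop) _ _
  calc ‖f x₀‖ = ⨍ _ in closedBall (0 : E) δ, ‖f x₀‖ ∂μ :=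
        (setAverage_const (measure_closedBall_pos μ 0 hδ).ne' measure_closedBall_lt_top.ne _).symm
    _ ≤ ⨍ y in closedBall 0 δ,
          (∫ r in (0 : ℝ)..1, r * scaledJetNorm δ f (x₀ + r • y)) ∂μ := by
        rw [setAverage_eq, setAverage_eq]
        refine smul_le_smul_of_nonneg_left ?_ (by positivity)
        exact setIntegral_mono_on (integrableOn_const measure_closedBall_lt_top.ne)
          (cont_rays.continuousOn.integrableOn_compact (isCompact_closedBall 0 δ))
          measurableSet_closedBall fun y hy =>
            norm_le_integral_mul_scaledJetNorm hf x₀ (mem_closedBall_zero_iff.1 hy)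
    _ ≤ _ := average_closedBall_integral_mul_le μ cont_jet hdim x₀ hδ

end LocalSobolev

section Coordinates

theorem norm_le_sum_norm_apply_single {ι G : Type*} [Fintype ι] [DecidableEq ι]
    [NormedAddCommGroup G] [NormedSpace ℝ G] (T : (ι → ℝ) →L[ℝ] G) :
    ‖T‖ ≤ ∑ i, ‖T (Pi.single i 1)‖ := by
  refine T.opNorm_le_bound (by positivity) fun v => ?_
  calc ‖T v‖ = ‖∑ i, v i • T (Pi.single i 1)‖ := by
        conv_lhs => rw [pi_eq_sum_univ' v, map_sum]
        simp only [map_smul]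
    _ ≤ ∑ i, ‖v i • T (Pi.single i 1)‖ := norm_sum_le _ _
    _ ≤ ∑ i, ‖T (Pi.single i 1)‖ * ‖v‖ := by
        gcongr with i
        rw [norm_smul, mul_comm]
        gcongr
        exact norm_le_pi_norm v i
    _ = (∑ i, ‖T (Pi.single i 1)‖) * ‖v‖ := by rw [Finset.sum_mul]

theorem norm_le_sum_sum_norm_apply_single_single {ι G : Type*} [Fintype ι] [DecidableEq ι]
    [NormedAddCommGroup G] [NormedSpace ℝ G] (T : (ι → ℝ) →L[ℝ] (ι → ℝ) →L[ℝ] G) :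
    ‖T‖ ≤ ∑ i, ∑ j, ‖T (Pi.single i 1) (Pi.single j 1)‖ :=
  (norm_le_sum_norm_apply_single T).trans
    (Finset.sum_le_sum fun _ _ => norm_le_sum_norm_apply_single _)

end Coordinates

section LpNorm

variable {α : Type*} [MeasurableSpace α] {μ : Measure α}

theorem lpNorm_two_eq_sqrt_integral_sq {g : α → ℝ} (hg : AEStronglyMeasurable g μ) :
    lpNorm g 2 μ = √(∫ x, g x ^ 2 ∂μ) := by
  rw [lpNorm_eq_integral_norm_rpow_toReal (by simp) (by simp) hg, Real.sqrt_eq_rpow]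
  simp

theorem sqrt_setAverage_sq_le_lpNorm {s : Set α} (hs : MeasurableSet s) {G g : α → ℝ}
    (hg : MemLp g 2 μ) (hG : ∀ x ∈ s, |G x| ≤ |g x|) :
    √(⨍ x in s, G x ^ 2 ∂μ) ≤ √((μ.real s)⁻¹) * lpNorm g 2 μ := by
  rw [lpNorm_two_eq_sqrt_integral_sq hg.1, ← Real.sqrt_mul (by positivity), setAverage_eq,
    smul_eq_mul]
  gcongr
  calc ∫ x in s, G x ^ 2 ∂μ ≤ ∫ x in s, g x ^ 2 ∂μ :=
        integral_mono_of_nonneg (ae_of_all _ fun x => sq_nonneg (G x)) hg.integrable_sq.integrableOn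
          (ae_restrict_of_forall_mem hs fun x hx => sq_le_sq.2 (hG x hx))
    _ ≤ ∫ x, g x ^ 2 ∂μ :=
        setIntegral_le_integral hg.integrable_sq (ae_of_all _ fun x => sq_nonneg (g x))

end LpNorm

namespace WKG

section Hyperboloid

variable {s : ℝ}

theorem hypT_sq (s : ℝ) (x : Fin 3 → ℝ) : hypT s x ^ 2 = s ^ 2 + ∑ i, x i ^ 2 := by
  rw [hypT, Real.sq_sqrt (by positivity), rad, Real.sq_sqrt (by positivity)]

theorem hypT_eq_sqrt (s : ℝ) : hypT s = fun x => √(s ^ 2 + ∑ i, x i ^ 2) := by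
  funext x
  rw [← hypT_sq, Real.sqrt_sq (show 0 ≤ hypT s x from Real.sqrt_nonneg _)]

theorem hypT_pos (hs : 0 < s) (x : Fin 3 → ℝ) : 0 < hypT s x :=
  Real.sqrt_pos.2 (by positivity)

theorem le_hypT (s : ℝ) (x : Fin 3 → ℝ) : s ≤ hypT s x :=
  Real.le_sqrt_of_sq_le (le_add_of_nonneg_right (sq_nonneg _))

theorem rad_le_hypT (s : ℝ) (x : Fin 3 → ℝ) : rad x ≤ hypT s x :=
  Real.le_sqrt_of_sq_le (le_add_of_nonneg_left (sq_nonneg _))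

theorem abs_apply_le_hypT (s : ℝ) (x : Fin 3 → ℝ) (i : Fin 3) : |x i| ≤ hypT s x := by
  refine (Real.abs_le_sqrt ?_).trans (rad_le_hypT s x)
  exact Finset.single_le_sum (f := fun i => x i ^ 2) (fun i _ => sq_nonneg (x i))
    (Finset.mem_univ i)

theorem contDiff_hypT (hs : 0 < s) {n : WithTop ℕ∞} : ContDiff ℝ n (hypT s) := by
  rw [hypT_eq_sqrt]
  exact ContDiff.sqrt (by fun_prop) fun x => by positivity

theorem fderiv_hypT_single (hs : 0 < s) (x : Fin 3 → ℝ) (i : Fin 3) :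
    fderiv ℝ (hypT s) x (Pi.single i 1) = x i / hypT s x := by
  have radicand_deriv : HasFDerivAt (fun x : Fin 3 → ℝ => s ^ 2 + ∑ j, x j ^ 2)
      (∑ j, (2 * x j) • ContinuousLinearMap.proj (R := ℝ) (φ := fun _ : Fin 3 => ℝ) j) x := by
    refine (HasFDerivAt.fun_sum fun j _ => ?_).const_add _
    refine ((hasDerivAt_pow 2 (x j)).comp_hasFDerivAt x (ContinuousLinearMap.proj (R := ℝ)
      (φ := fun _ : Fin 3 => ℝ) j).hasFDerivAt).congr_fderiv ?_
    simp
  have hypT_eq : √(s ^ 2 + ∑ j, x j ^ 2) = hypT s x := congr_fun (hypT_eq_sqrt s).symm x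
  rw [hypT_eq_sqrt, (radicand_deriv.sqrt (by positivity)).fderiv]
  simp only [hypT_eq]
  simp only [one_div, mul_inv_rev, smul_apply, sum_apply, ContinuousLinearMap.proj_apply,
    Pi.single_apply, smul_eq_mul, mul_ite, mul_one, mul_zero, Finset.sum_ite_eq', Finset.mem_univ,
    ↓reduceIte]
  field_simp

theorem contDiff_pt (hs : 0 < s) {n : WithTop ℕ∞} : ContDiff ℝ n (pt s) :=
  (contDiff_hypT hs).prodMk contDiff_id

theorem hypT_comparable (hs : 0 < s) {x₀ x : Fin 3 → ℝ}
    (hx : x ∈ Metric.closedBall x₀ (hypT s x₀ / 4)) :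
    hypT s x₀ ≤ 2 * hypT s x ∧ hypT s x ≤ 3 / 2 * hypT s x₀ := by
  have pos₀ := hypT_pos hs x₀
  have pos := hypT_pos hs x
  have sq₀ := hypT_sq s x₀
  have sq := hypT_sq s x
  have coord (i : Fin 3) : (x i - x₀ i) ^ 2 ≤ (hypT s x₀ / 4) ^ 2 := by
    rw [← sq_abs]
    gcongr
    exact (norm_le_pi_norm (x - x₀) i).trans (mem_closedBall_iff_norm.1 hx)
  have coord₀ := coord 0
  have coord₁ := coord 1
  have coord₂ := coord 2
  simp only [Fin.sum_univ_three] at sq₀ sq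
  constructor
  · refine (sq_le_sq₀ pos₀.le (by positivity)).1 ?_
    nlinarith [sq_nonneg (2 * x 0 - x₀ 0), sq_nonneg (2 * x 1 - x₀ 1),
      sq_nonneg (2 * x 2 - x₀ 2), sq_nonneg s]
  · refine (sq_le_sq₀ pos.le (by positivity)).1 ?_
    nlinarith [sq_nonneg (3 * x₀ 0 - 2 * x 0), sq_nonneg (3 * x₀ 1 - 2 * x 1),
      sq_nonneg (3 * x₀ 2 - 2 * x 2), sq_nonneg s]

end Hyperboloid

section Boosts

variable {s : ℝ}

theorem contDiff_Lb {n : WithTop ℕ∞} {ψ : Fn} (hψ : ContDiff ℝ (n + 1) ψ) (i : Fin 3) :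
    ContDiff ℝ n (Lb i ψ) := by
  have pdc_smooth (α : Fin 4) : ContDiff ℝ n (pdc α ψ) :=
    (hψ.fderiv_right le_rfl).clm_apply contDiff_const
  exact (contDiff_fst.mul (pdc_smooth i.succ)).add
    (((contDiff_apply ℝ ℝ i).comp contDiff_snd).mul (pdc_smooth 0))

theorem Lb_pt (hs : 0 < s) {ψ : Fn} (hψ : Differentiable ℝ ψ) (i : Fin 3) (x : Fin 3 → ℝ) :
    Lb i ψ (pt s x) = hypT s x * fderiv ℝ (fun x => ψ (pt s x)) x (Pi.single i 1) := by
  have pos := hypT_pos hs x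
  have pt_deriv : HasFDerivAt (pt s) ((fderiv ℝ (hypT s) x).prod (.id ℝ _)) x :=
    ((contDiff_hypT hs (n := 1)).differentiable one_ne_zero x).hasFDerivAt.prodMk
      (hasFDerivAt_id x)
  have chain := ((hψ (pt s x)).hasFDerivAt.comp x pt_deriv).fderiv
  -- The tangent vector `∂_i` of `H_s` in the coordinates `x` is `L_i / t`.
  have tangent : ((x i / hypT s x, Pi.single i 1) : Pt) = (x i / hypT s x) • e4 0 + e4 i.succ := by
    ext j
    · simp [e4]
    · fin_cases i <;> fin_cases j <;> simp [e4]
  calc Lb i ψ (pt s x)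
      = hypT s x * fderiv ℝ ψ (pt s x) (x i / hypT s x, Pi.single i 1) := by
        rw [tangent, map_add, map_smul]
        simp only [Lb, pdX, pdT, pdc, pt, smul_eq_mul]
        field_simp
        ring
    _ = hypT s x * fderiv ℝ (ψ ∘ pt s) x (Pi.single i 1) := by
        simp [chain, fderiv_hypT_single hs]

theorem Lb_Lb_pt (hs : 0 < s) {φ : Fn} (hφ : ContDiff ℝ 2 φ) (i j : Fin 3) (x : Fin 3 → ℝ) :
    Lb i (Lb j φ) (pt s x) =
      x i * fderiv ℝ (fun x => φ (pt s x)) x (Pi.single j 1) + hypT s x ^ 2 *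
        fderiv ℝ (fderiv ℝ fun x => φ (pt s x)) x (Pi.single i 1) (Pi.single j 1) := by
  have pos := hypT_pos hs x
  set f : (Fin 3 → ℝ) → ℝ := fun x => φ (pt s x)
  have hf : ContDiff ℝ 2 f := hφ.comp (contDiff_pt hs)
  have hf' : ContDiff ℝ 1 (fderiv ℝ f) := hf.fderiv_right le_rfl
  have boost : (fun x => Lb j φ (pt s x)) = fun x => hypT s x * fderiv ℝ f x (Pi.single j 1) :=
    funext (Lb_pt hs (hφ.differentiable two_ne_zero) j)
  have product := ((contDiff_hypT hs (n := 1)).differentiable one_ne_zero x).hasFDerivAt.fun_mul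
    ((hf'.differentiable one_ne_zero x).hasFDerivAt.clm_apply
      (hasFDerivAt_const (Pi.single j 1 : Fin 3 → ℝ) x))
  rw [Lb_pt hs ((contDiff_Lb (n := 1) hφ j).differentiable one_ne_zero), boost, product.fderiv]
  simp only [ContinuousLinearMap.comp_zero, zero_add, add_apply, smul_apply,
    ContinuousLinearMap.flip_apply, smul_eq_mul, fderiv_hypT_single hs]
  field_simp
  ring

theorem fderiv_fderiv_comp_pt_comm (hs : 0 < s) {φ : Fn} (hφ : ContDiff ℝ 2 φ)
    (x v w : Fin 3 → ℝ) :
    fderiv ℝ (fderiv ℝ fun x => φ (pt s x)) x v w =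
      fderiv ℝ (fderiv ℝ fun x => φ (pt s x)) x w v :=
  (hφ.comp (contDiff_pt hs)).contDiffAt.isSymmSndFDerivAt
    (by simp [minSmoothness_of_isRCLikeNormedField]) v w

/-- The multi-indices `J` with `|J| ≤ 2`; the entries, being at most `2`, are encoded in `Fin 3`. -/
def boostIdx : Finset (Fin 3 → Fin 3) :=
  {J | ∑ i, (J i : ℕ) ≤ 2}

theorem zero_mem_boostIdx : 0 ∈ boostIdx := by
  simp [boostIdx]

theorem exists_applyL_eq_Lb (i : Fin 3) (φ : Fn) :
    ∃ J ∈ boostIdx, applyL (fun k => (J k : ℕ)) φ = Lb i φ := by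
  refine ⟨Pi.single i 1, ?_, ?_⟩
  · revert i; decide
  · fin_cases i <;> rfl

theorem exists_applyL_eq_Lb_Lb {i j : Fin 3} (hij : i ≤ j) (φ : Fn) :
    ∃ J ∈ boostIdx, applyL (fun k => (J k : ℕ)) φ = Lb i (Lb j φ) := by
  refine ⟨Pi.single i 1 + Pi.single j 1, ?_, ?_⟩
  · revert i j; decide
  · fin_cases i <;> fin_cases j <;> first | rfl | exact absurd hij (by decide)

/-- The sum of all `|L^J φ|`, `|J| ≤ 2`, at the point of `H_s` over `x`. -/
def boostJet (s : ℝ) (φ : Fn) (x : Fin 3 → ℝ) : ℝ :=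
  ∑ J ∈ boostIdx, |applyL (fun k => (J k : ℕ)) φ (pt s x)|

theorem abs_applyL_le_boostJet {J : Fin 3 → Fin 3} (hJ : J ∈ boostIdx) (s : ℝ) (φ : Fn)
    (x : Fin 3 → ℝ) : |applyL (fun k => (J k : ℕ)) φ (pt s x)| ≤ boostJet s φ x :=
  Finset.single_le_sum (f := fun J : Fin 3 → Fin 3 => |applyL (fun k => (J k : ℕ)) φ (pt s x)|)
    (fun _ _ => abs_nonneg _) hJ

theorem boostJet_nonneg (s : ℝ) (φ : Fn) (x : Fin 3 → ℝ) : 0 ≤ boostJet s φ x :=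
  Finset.sum_nonneg fun _ _ => abs_nonneg _

theorem abs_le_boostJet (s : ℝ) (φ : Fn) (x : Fin 3 → ℝ) : |φ (pt s x)| ≤ boostJet s φ x :=
  abs_applyL_le_boostJet zero_mem_boostIdx s φ x

theorem abs_Lb_le_boostJet (i : Fin 3) (s : ℝ) (φ : Fn) (x : Fin 3 → ℝ) :
    |Lb i φ (pt s x)| ≤ boostJet s φ x := by
  obtain ⟨J, hJ, hL⟩ := exists_applyL_eq_Lb i φ
  exact hL ▸ abs_applyL_le_boostJet hJ s φ x

theorem abs_Lb_Lb_le_boostJet {i j : Fin 3} (hij : i ≤ j) (s : ℝ) (φ : Fn) (x : Fin 3 → ℝ) :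
    |Lb i (Lb j φ) (pt s x)| ≤ boostJet s φ x := by
  obtain ⟨J, hJ, hL⟩ := exists_applyL_eq_Lb_Lb hij φ
  exact hL ▸ abs_applyL_le_boostJet hJ s φ x

end Boosts

section PointwiseBounds

variable {s : ℝ} {φ : Fn}

theorem hypT_mul_abs_fderiv_single_le (hs : 0 < s) (hφ : Differentiable ℝ φ) (i : Fin 3)
    (x : Fin 3 → ℝ) :
    hypT s x * |fderiv ℝ (fun x => φ (pt s x)) x (Pi.single i 1)| ≤ boostJet s φ x := by
  calc hypT s x * |fderiv ℝ (fun x => φ (pt s x)) x (Pi.single i 1)| = |Lb i φ (pt s x)| := by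
        rw [Lb_pt hs hφ, abs_mul, abs_of_pos (hypT_pos hs x)]
    _ ≤ boostJet s φ x := abs_Lb_le_boostJet i s φ x

theorem hypT_mul_norm_fderiv_le (hs : 0 < s) (hφ : Differentiable ℝ φ) (x : Fin 3 → ℝ) :
    hypT s x * ‖fderiv ℝ (fun x => φ (pt s x)) x‖ ≤ 3 * boostJet s φ x := by
  have pos := hypT_pos hs x
  calc hypT s x * ‖fderiv ℝ (fun x => φ (pt s x)) x‖
      ≤ hypT s x * ∑ i, |fderiv ℝ (fun x => φ (pt s x)) x (Pi.single i 1)| := by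
        gcongr
        exact norm_le_sum_norm_apply_single _
    _ ≤ ∑ _ : Fin 3, boostJet s φ x := by
        rw [Finset.mul_sum]
        exact Finset.sum_le_sum fun i _ => hypT_mul_abs_fderiv_single_le hs hφ i x
    _ = 3 * boostJet s φ x := by simp

theorem hypT_sq_mul_abs_fderiv_fderiv_single_le (hs : 0 < s) (hφ : ContDiff ℝ 2 φ) (i j : Fin 3)
    (x : Fin 3 → ℝ) :
    hypT s x ^ 2 *
        |fderiv ℝ (fderiv ℝ fun x => φ (pt s x)) x (Pi.single i 1) (Pi.single j 1)|
      ≤ 2 * boostJet s φ x := by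
  wlog hij : i ≤ j generalizing i j
  · rw [fderiv_fderiv_comp_pt_comm hs hφ]
    exact this j i (le_of_not_ge hij)
  set f : (Fin 3 → ℝ) → ℝ := fun x => φ (pt s x)
  calc hypT s x ^ 2 * |fderiv ℝ (fderiv ℝ f) x (Pi.single i 1) (Pi.single j 1)|
      = |Lb i (Lb j φ) (pt s x) - x i * fderiv ℝ f x (Pi.single j 1)| := by
        rw [Lb_Lb_pt hs hφ, add_sub_cancel_left, abs_mul, abs_sq]
    _ ≤ |Lb i (Lb j φ) (pt s x)| + |x i| * |fderiv ℝ f x (Pi.single j 1)| := by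
        rw [← abs_mul]
        exact abs_sub _ _
    _ ≤ boostJet s φ x + hypT s x * |fderiv ℝ f x (Pi.single j 1)| := by
        gcongr
        · exact abs_Lb_Lb_le_boostJet hij s φ x
        · exact abs_apply_le_hypT s x i
    _ ≤ 2 * boostJet s φ x := by
        linarith [hypT_mul_abs_fderiv_single_le hs (hφ.differentiable two_ne_zero) j x]

theorem hypT_sq_mul_norm_fderiv_fderiv_le (hs : 0 < s) (hφ : ContDiff ℝ 2 φ) (x : Fin 3 → ℝ) :
    hypT s x ^ 2 * ‖fderiv ℝ (fderiv ℝ fun x => φ (pt s x)) x‖ ≤ 18 * boostJet s φ x := by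
  set f : (Fin 3 → ℝ) → ℝ := fun x => φ (pt s x)
  calc hypT s x ^ 2 * ‖fderiv ℝ (fderiv ℝ f) x‖
      ≤ hypT s x ^ 2 *
          ∑ i, ∑ j, |fderiv ℝ (fderiv ℝ f) x (Pi.single i 1) (Pi.single j 1)| := by
        gcongr
        exact norm_le_sum_sum_norm_apply_single_single _
    _ ≤ ∑ _ : Fin 3, ∑ _ : Fin 3, 2 * boostJet s φ x := by
        simp only [Finset.mul_sum]
        exact Finset.sum_le_sum fun i _ => Finset.sum_le_sum fun j _ =>
          hypT_sq_mul_abs_fderiv_fderiv_single_le hs hφ i j x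
    _ = 18 * boostJet s φ x := by
        simp only [Finset.sum_const, Finset.card_univ, Fintype.card_fin, nsmul_eq_mul]
        ring

theorem scaledJetNorm_comp_pt_le (hs : 0 < s) (hφ : ContDiff ℝ 2 φ) {x₀ x : Fin 3 → ℝ}
    (hx : x ∈ Metric.closedBall x₀ (hypT s x₀ / 4)) :
    scaledJetNorm (hypT s x₀ / 4) (fun x => φ (pt s x)) x
      ≤ 75 / 4 * hypT s x₀ * (boostJet s φ x / hypT s x) := by
  obtain ⟨lower, upper⟩ := hypT_comparable hs hx
  have pos₀ := hypT_pos hs x₀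
  have pos := hypT_pos hs x
  have jet_nonneg := boostJet_nonneg s φ x
  have value := abs_le_boostJet s φ x
  have gradient := hypT_mul_norm_fderiv_le hs (hφ.differentiable two_ne_zero) x
  have hessian := hypT_sq_mul_norm_fderiv_fderiv_le hs hφ x
  set f : (Fin 3 → ℝ) → ℝ := fun x => φ (pt s x)
  calc scaledJetNorm (hypT s x₀ / 4) f x
      ≤ 2 * ‖f x‖ + 4 * (2 * hypT s x / 4) * ‖fderiv ℝ f x‖
          + (2 * hypT s x / 4) ^ 2 * ‖fderiv ℝ (fderiv ℝ f) x‖ := by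
        unfold scaledJetNorm
        gcongr
    _ ≤ 25 / 2 * boostJet s φ x := by
        rw [Real.norm_eq_abs]
        linarith
    _ ≤ 75 / 4 * hypT s x₀ * (boostJet s φ x / hypT s x) := by
        rw [mul_div_assoc', le_div_iff₀ pos]
        nlinarith

end PointwiseBounds

section WeightedNorms

variable {s : ℝ}

theorem L2H_const_mul {c : ℝ} (hc : 0 ≤ c) (s : ℝ) (ψ : Fn) :
    L2H s (fun p => c * ψ p) = c * L2H s ψ := by
  simp only [L2H, mul_pow, integral_const_mul]
  rw [Real.sqrt_mul (sq_nonneg c), Real.sqrt_sq hc]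

theorem boostJet_div_hypT_eq_sum (hs : 0 < s) (φ : Fn) (x : Fin 3 → ℝ) :
    boostJet s φ x / hypT s x =
      ∑ J ∈ boostIdx, |applyL (fun k => (J k : ℕ)) φ (pt s x) / hypT s x| := by
  simp only [boostJet, Finset.sum_div, abs_div, abs_of_pos (hypT_pos hs x)]

theorem memLp_boostJet_div_hypT (hs : 0 < s) {φ : Fn} (hL : ∀ J ∈ boostIdx,
      MemLp (fun x => applyL (fun k => (J k : ℕ)) φ (pt s x) / hypT s x) 2) :
    MemLp (fun x => boostJet s φ x / hypT s x) 2 := by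
  simp only [boostJet_div_hypT_eq_sum hs]
  exact memLp_finsetSum _ fun J hJ => (hL J hJ).abs

theorem lpNorm_boostJet_div_hypT_le (hs : 0 < s) {φ : Fn} (hL : ∀ J ∈ boostIdx,
      MemLp (fun x => applyL (fun k => (J k : ℕ)) φ (pt s x) / hypT s x) 2) :
    lpNorm (fun x => boostJet s φ x / hypT s x) 2 volume ≤
      ∑ J ∈ boostIdx, L2H s (fun p => applyL (fun k => (J k : ℕ)) φ p / p.1) := by
  simp only [boostJet_div_hypT_eq_sum hs]
  refine (lpNorm_sum_le (fun J hJ => (hL J hJ).abs) one_le_two).trans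
    (Finset.sum_le_sum fun J hJ => ?_)
  rw [lpNorm_abs (hL J hJ).1, lpNorm_two_eq_sqrt_integral_sq (hL J hJ).1]
  rfl

theorem tauP_pt_rpow_half_le (hs : 1 ≤ s) (x : Fin 3 → ℝ) :
    tauP (pt s x) ^ ((1 : ℝ) / 2) ≤ 2 * √(hypT s x) := by
  have one_le : 1 ≤ hypT s x := hs.trans (le_hypT s x)
  have rad_nonneg : 0 ≤ rad x := Real.sqrt_nonneg _
  have tauP_le : tauP (pt s x) ≤ 2 ^ 2 * hypT s x := by
    refine Real.sqrt_le_iff.2 ⟨by positivity, ?_⟩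
    simp only [ubar, pt]
    nlinarith [rad_le_hypT s x]
  calc tauP (pt s x) ^ ((1 : ℝ) / 2) = √(tauP (pt s x)) := (Real.sqrt_eq_rpow _).symm
    _ ≤ √(2 ^ 2 * hypT s x) := Real.sqrt_le_sqrt tauP_le
    _ = 2 * √(hypT s x) := by rw [Real.sqrt_mul (by positivity), Real.sqrt_sq zero_le_two]

end WeightedNorms

section SobolevOnHyperboloid

variable {s : ℝ} {φ : Fn}

theorem abs_pt_le_lpNorm_boostJet (hs : 0 < s) (hφ : ContDiff ℝ 2 φ) (hL : ∀ J ∈ boostIdx,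
      MemLp (fun x => applyL (fun k => (J k : ℕ)) φ (pt s x) / hypT s x) 2) (x₀ : Fin 3 → ℝ) :
    |φ (pt s x₀)| ≤ 2 * (√((volume.real (Metric.closedBall x₀ (hypT s x₀ / 4)))⁻¹) *
      (75 / 4 * hypT s x₀ * lpNorm (fun x => boostJet s φ x / hypT s x) 2 volume)) := by
  set t₀ := hypT s x₀
  have pos₀ : 0 < t₀ := hypT_pos hs x₀
  have local_sobolev : |φ (pt s x₀)| ≤
      2 * √(⨍ x in Metric.closedBall x₀ (t₀ / 4),
        scaledJetNorm (t₀ / 4) (fun x => φ (pt s x)) x ^ 2) := by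
    refine (norm_le_sqrt_average_closedBall volume (hφ.comp (contDiff_pt hs)) (by simp) x₀
      (by positivity : 0 < t₀ / 4)).trans_eq ?_
    rw [Module.finrank_fintype_fun_eq_card, Fintype.card_fin,
      show (2 : ℝ) / (4 - (3 : ℕ)) = 2 by norm_num]
    rfl
  have jet_le (x : Fin 3 → ℝ) (hx : x ∈ Metric.closedBall x₀ (t₀ / 4)) :
      |scaledJetNorm (t₀ / 4) (fun x => φ (pt s x)) x|
        ≤ |(75 / 4 * t₀) • (boostJet s φ x / hypT s x)| := by
    rw [abs_of_nonneg (by unfold scaledJetNorm; positivity)]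
    exact (scaledJetNorm_comp_pt_le hs hφ hx).trans (le_abs_self _)
  have homogeneous : lpNorm ((75 / 4 * t₀) • fun x => boostJet s φ x / hypT s x) 2 volume
      = 75 / 4 * t₀ * lpNorm (fun x => boostJet s φ x / hypT s x) 2 volume := by
    rw [lpNorm_const_smul, coe_nnnorm, Real.norm_of_nonneg (by positivity)]
  rw [← homogeneous]
  refine local_sobolev.trans (mul_le_mul_of_nonneg_left ?_ zero_le_two)
  exact sqrt_setAverage_sq_le_lpNorm Metric.isClosed_closedBall.measurableSet
    ((memLp_boostJet_div_hypT hs hL).const_smul (75 / 4 * t₀)) jet_le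

theorem sqrt_mul_sqrt_inv_volume_closedBall_mul (x₀ : Fin 3 → ℝ) {t : ℝ} (ht : 0 < t) :
    √t * √((volume.real (Metric.closedBall x₀ (t / 4)))⁻¹) * t = √8 := by
  have volume_eq : volume.real (Metric.closedBall x₀ (t / 4)) = t ^ 3 / 8 := by
    rw [measureReal_def, Real.volume_pi_closedBall x₀ (by positivity),
      ENNReal.toReal_ofReal (by positivity), Fintype.card_fin]
    ring
  rw [volume_eq, ← Real.sqrt_mul ht.le, show t * (t ^ 3 / 8)⁻¹ = 8 / t ^ 2 by field_simp,
    Real.sqrt_div' _ (sq_nonneg t), Real.sqrt_sq ht.le, div_mul_cancel₀ _ ht.ne']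

theorem sqrt_hypT_mul_abs_pt_le (hs : 0 < s) (hφ : ContDiff ℝ 2 φ) (hL : ∀ J ∈ boostIdx,
      MemLp (fun x => applyL (fun k => (J k : ℕ)) φ (pt s x) / hypT s x) 2) (x₀ : Fin 3 → ℝ) :
    √(hypT s x₀) * |φ (pt s x₀)| ≤
      225 / 2 * ∑ J ∈ boostIdx, L2H s (fun p => applyL (fun k => (J k : ℕ)) φ p / p.1) := by
  have sqrt_eight_le : √(8 : ℝ) ≤ 3 := Real.sqrt_le_iff.2 (by norm_num)
  have sobolev := abs_pt_le_lpNorm_boostJet hs hφ hL x₀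
  have scale := sqrt_mul_sqrt_inv_volume_closedBall_mul x₀ (hypT_pos hs x₀)
  have minkowski := lpNorm_boostJet_div_hypT_le hs hL
  set V := volume.real (Metric.closedBall x₀ (hypT s x₀ / 4))
  set N := lpNorm (fun x => boostJet s φ x / hypT s x) 2 volume
  calc √(hypT s x₀) * |φ (pt s x₀)|
      ≤ √(hypT s x₀) * (2 * (√V⁻¹ * (75 / 4 * hypT s x₀ * N))) := by gcongr
    _ = 75 / 2 * √8 * N := by
        rw [← scale]
        ring
    _ ≤ 75 / 2 * 3 * N := by
        gcongr
        exact lpNorm_nonneg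
    _ ≤ 75 / 2 * 3 * ∑ J ∈ boostIdx, L2H s (fun p => applyL (fun k => (J k : ℕ)) φ p / p.1) := by
        gcongr
    _ = _ := by norm_num

end SobolevOnHyperboloid

/-- Functions smooth on spacetime with compactly supported restriction to `H_s`, a class which is
stable under boosts and on which all the weighted `L²(H_s)` norms are finite. -/
def SmoothCompactSlice (s : ℝ) (ψ : Fn) : Prop :=
  ContDiff ℝ (⊤ : ℕ∞) ψ ∧ HasCompactSupport fun x => ψ (pt s x)

namespace SmoothCompactSlice

variable {s : ℝ} {ψ : Fn}

theorem Lb (h : SmoothCompactSlice s ψ) (hs : 0 < s) (i : Fin 3) :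
    SmoothCompactSlice s (Lb i ψ) := by
  refine ⟨contDiff_Lb h.1 i, ?_⟩
  rw [funext (Lb_pt hs (h.1.differentiable (by simp)) i)]
  exact (h.2.fderiv_apply ℝ _).mul_left

theorem iterate_Lb (h : SmoothCompactSlice s ψ) (hs : 0 < s) (i : Fin 3) (n : ℕ) :
    SmoothCompactSlice s ((WKG.Lb i)^[n] ψ) :=
  Function.Iterate.rec (SmoothCompactSlice s) h (fun _ h => h.Lb hs i) n

theorem applyL (h : SmoothCompactSlice s ψ) (hs : 0 < s) (J : Fin 3 → ℕ) :
    SmoothCompactSlice s (applyL J ψ) :=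
  ((h.iterate_Lb hs 2 _).iterate_Lb hs 1 _).iterate_Lb hs 0 _

theorem memLp_div_hypT (h : SmoothCompactSlice s ψ) (hs : 0 < s) (p : ENNReal) :
    MemLp (fun x => ψ (pt s x) / hypT s x) p := by
  have cont : Continuous fun x => ψ (pt s x) / hypT s x :=
    (h.1.continuous.comp (contDiff_pt hs (n := 0)).continuous).div
      (contDiff_hypT hs (n := 0)).continuous fun x => (hypT_pos hs x).ne'
  simp only [div_eq_mul_inv] at cont ⊢
  exact cont.memLp_of_hasCompactSupport h.2.mul_right

end SmoothCompactSlice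

end WKG

theorem weighted_sobolev_general (a : ℝ) {s : ℝ} (hs : 1 ≤ s) {φ : Fn} (hφ : ContDiff ℝ 2 φ)
    (hL : ∀ J : Fin 3 → Fin 3, (∑ i, (J i : ℕ)) ≤ 2 →
      MemLp (fun x => applyL (fun i => (J i : ℕ)) φ (pt s x) / hypT s x) 2) :
    LinfH s (fun p => s ^ a * tauP p ^ ((1 : ℝ) / 2) * φ p)
      ≤ 225 * ∑ J : Fin 3 → Fin 3,
          if (∑ i : Fin 3, (J i : ℕ)) ≤ 2 then
            L2H s (fun p => (s ^ a / p.1) * applyL (fun i => (J i : ℕ)) φ p)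
          else 0 := by
  have pos : 0 < s := by linarith
  have pull_out (J : Fin 3 → Fin 3) :
      L2H s (fun p => (s ^ a / p.1) * applyL (fun i => (J i : ℕ)) φ p)
        = s ^ a * L2H s (fun p => applyL (fun i => (J i : ℕ)) φ p / p.1) := by
    simp only [← L2H_const_mul (Real.rpow_nonneg pos.le a), div_mul_eq_mul_div, mul_div_assoc]
  rw [← Finset.sum_filter, ← boostIdx, Finset.sum_congr rfl fun J _ => pull_out J,
    ← Finset.mul_sum]
  refine ciSup_le fun x => ?_
  have pointwise := sqrt_hypT_mul_abs_pt_le pos hφ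
    (fun J hJ => hL J (Finset.mem_filter.1 hJ).2) x
  calc |s ^ a * tauP (pt s x) ^ ((1 : ℝ) / 2) * φ (pt s x)|
      = s ^ a * tauP (pt s x) ^ ((1 : ℝ) / 2) * |φ (pt s x)| := by
        have tauP_nonneg : 0 ≤ tauP (pt s x) := Real.sqrt_nonneg _
        rw [abs_mul, abs_of_nonneg (by positivity)]
    _ ≤ s ^ a * (2 * √(hypT s x)) * |φ (pt s x)| := by
        gcongr
        exact tauP_pt_rpow_half_le hs x
    _ = 2 * s ^ a * (√(hypT s x) * |φ (pt s x)|) := by ring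
    _ ≤ 2 * s ^ a * (225 / 2 *
          ∑ J ∈ boostIdx, L2H s (fun p => applyL (fun i => (J i : ℕ)) φ p / p.1)) := by gcongr
    _ = _ := by ring

/-- Weighted Sobolev estimate on hyperboloids. -/
theorem weighted_sobolev (a : ℝ) (ha : 0 ≤ a) :
    ∃ C : ℝ, 0 < C ∧ ∀ s0 s : ℝ, 1 < s0 → s0 ≤ s →
      ∀ φ : Fn, ContDiff ℝ (⊤ : ℕ∞) φ →
        (∀ σ : ℝ, HasCompactSupport (fun x : Fin 3 → ℝ => φ (pt σ x))) →
        LinfH s (fun p => s ^ a * tauP p ^ ((1:ℝ)/2) * φ p)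
          ≤ C * ∑ J : Fin 3 → Fin 3,
              if (∑ i : Fin 3, (J i : ℕ)) ≤ 2 then
                L2H s (fun p => (s ^ a / p.1) * applyL (fun i => (J i : ℕ)) φ p)
              else 0 := by
  refine ⟨225, by norm_num, fun s0 s hs0 hs φ hφ hc => ?_⟩
  have one_lt : 1 < s := hs0.trans_le hs
  have slice : SmoothCompactSlice s φ := ⟨hφ, hc s⟩
  exact weighted_sobolev_general a one_lt.le (hφ.of_le (WithTop.coe_le_coe.2 le_top)) fun J _ =>
    (slice.applyL (by positivity) _).memLp_div_hypT (by positivity) 2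
end
end

section
/- Coercivity of the flux density: There exist absolute constants c, C > 0 such that for all real numbers X_u ≥ 0, X_r ≥ 0, μ ∈ [0,1), A, B, G ∈ ℝ, and D ≥ 0, the quantity E = X_u(1−μ)A² + (1/2)(X_u + X_r(1+μ))B² − X_u(1−μ)AB + (1/2)(X_u + X_r(1−μ))G² + D satisfies c·E' ≤ E ≤ C·E', where E' = X_u(1−μ)A² + (X_u + X_r(1+μ))B² + (X_u + X_r(1−μ))G² + D. (Here A, B, G play the roles of ∂_u^BΦ, ∂_r^BΦ, |∇̸Φ| and μ = r/t in the flux ^{(X)}P̃_α N'^α of the paper.) -/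
open MeasureTheory Real Set

noncomputable section

/-!
The cross term couples only `A` and `B`, so coercivity is a discriminant condition on a binary form.
With `p = Xu (1 - μ)` and `q = Xu + Xr (1 + μ)` one has `p ≤ (1 - μ) q`, and
`p A² + q B² / 2 - p A B` is definite relative to `p A² + q B²` as soon as `p ≤ κ q` with `κ < 2`.
The only degeneration is therefore at `μ = -1`, and the lower constant `(1 + μ) / 6` stays away from
zero on `[μ₀, 1]` for every `μ₀ > -1`.
-/

theorem binary_form_nonneg_of_discrim_nonpos {R : Type*} [CommRing R] [LinearOrder R]
    [IsStrictOrderedRing R] {a b c : R} (ha : 0 ≤ a) (hc : 0 ≤ c) (h : discrim a b c ≤ 0)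
    (x y : R) : 0 ≤ a * x ^ 2 + b * x * y + c * y ^ 2 := by
  rcases ha.eq_or_lt with rfl | ha
  · have hb : b = 0 := by simpa [discrim, sq_nonpos_iff] using h
    simpa [hb] using mul_nonneg hc (sq_nonneg y)
  · have complete_square : 4 * a * (a * x ^ 2 + b * x * y + c * y ^ 2) =
        (2 * a * x + b * y) ^ 2 + -discrim a b c * y ^ 2 := by
      rw [discrim]
      ring
    have : 0 ≤ 4 * a * (a * x ^ 2 + b * x * y + c * y ^ 2) := by
      rw [complete_square]
      exact add_nonneg (sq_nonneg _) (mul_nonneg (neg_nonneg.mpr h) (sq_nonneg y))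
    exact nonneg_of_mul_nonneg_right this (by positivity)

section OrderedField

variable {R : Type*} [Field R] [LinearOrder R] [IsStrictOrderedRing R]

section BinaryForm

variable {p q : R}

theorem mul_weighted_sum_sq_le_binary_form {κ : R} (hκ : 0 ≤ κ) (hp : 0 ≤ p) (hq : 0 ≤ q)
    (hpq : p ≤ κ * q) (x y : R) :
    (2 - κ) / 6 * (p * x ^ 2 + q * y ^ 2) ≤ p * x ^ 2 + 1 / 2 * q * y ^ 2 - p * x * y := by
  -- The coefficients are `1 - (2 - κ) / 6` and `1 / 2 - (2 - κ) / 6`.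
  have hdiscrim : discrim ((4 + κ) / 6 * p) (-p) ((1 + κ) / 6 * q) ≤ 0 := by
    have hle : p ≤ (4 + κ) * (1 + κ) / 9 * q :=
      calc p ≤ κ * q := hpq
        _ ≤ κ * q + (κ - 2) ^ 2 / 9 * q := le_add_of_nonneg_right (by positivity)
        _ = (4 + κ) * (1 + κ) / 9 * q := by ring
    calc discrim ((4 + κ) / 6 * p) (-p) ((1 + κ) / 6 * q)
        = p * (p - (4 + κ) * (1 + κ) / 9 * q) := by rw [discrim]; ring
      _ ≤ 0 := mul_nonpos_of_nonneg_of_nonpos hp (sub_nonpos.mpr hle)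
  have hdiff := binary_form_nonneg_of_discrim_nonpos (by positivity) (by positivity) hdiscrim x y
  linear_combination hdiff

theorem binary_form_le_mul_weighted_sum_sq (hp : 0 ≤ p) (hpq : p ≤ 2 * q) (x y : R) :
    p * x ^ 2 + 1 / 2 * q * y ^ 2 - p * x * y ≤ 3 / 2 * (p * x ^ 2 + q * y ^ 2) := by
  have hdiscrim : discrim (1 / 2 * p) p q ≤ 0 :=
    calc discrim (1 / 2 * p) p q = p * (p - 2 * q) := by rw [discrim]; ring
      _ ≤ 0 := mul_nonpos_of_nonneg_of_nonpos hp (sub_nonpos.mpr hpq)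
  have hq : 0 ≤ q := by linarith
  have hdiff := binary_form_nonneg_of_discrim_nonpos (by positivity) hq hdiscrim x y
  linear_combination hdiff

end BinaryForm

/-- The flux quadratic form with weights `Xu`, `Xr`, where `μ` stands for `r / t` and `A`, `B`, `G`
for `∂_u^B Φ`, `∂_r^B Φ`, `|∇̸Φ|`. The scalar `D` stands for the remaining
terms of the flux. -/
def fluxDensity (Xu Xr μ A B G D : R) : R :=
  Xu * (1 - μ) * A ^ 2 + (1 / 2) * (Xu + Xr * (1 + μ)) * B ^ 2 - Xu * (1 - μ) * A * B
    + (1 / 2) * (Xu + Xr * (1 - μ)) * G ^ 2 + D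

/-- The weighted sum of squares to which `fluxDensity` is compared: the cross term is dropped and
the factors `1 / 2` are normalized to `1`. -/
def fluxSumSq (Xu Xr μ A B G D : R) : R :=
  Xu * (1 - μ) * A ^ 2 + (Xu + Xr * (1 + μ)) * B ^ 2 + (Xu + Xr * (1 - μ)) * G ^ 2 + D

section Flux

variable {Xu Xr μ D : R}

theorem fluxSumSq_nonneg (hXu : 0 ≤ Xu) (hXr : 0 ≤ Xr) (hμ : μ ∈ Icc (-1) 1) (hD : 0 ≤ D)
    (A B G : R) : 0 ≤ fluxSumSq Xu Xr μ A B G D := by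
  have hsub : 0 ≤ 1 - μ := sub_nonneg.mpr hμ.2
  have hadd : 0 ≤ 1 + μ := neg_le_iff_add_nonneg'.mp hμ.1
  unfold fluxSumSq
  positivity

theorem mul_fluxSumSq_le_fluxDensity (hXu : 0 ≤ Xu) (hXr : 0 ≤ Xr) (hμ : μ ∈ Icc (-1) 1)
    (hD : 0 ≤ D) (A B G : R) :
    (1 + μ) / 6 * fluxSumSq Xu Xr μ A B G D ≤ fluxDensity Xu Xr μ A B G D := by
  have hsub : 0 ≤ 1 - μ := sub_nonneg.mpr hμ.2
  have hadd : 0 ≤ 1 + μ := neg_le_iff_add_nonneg'.mp hμ.1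
  have hweights : Xu * (1 - μ) ≤ (1 - μ) * (Xu + Xr * (1 + μ)) := by
    rw [mul_comm]
    exact mul_le_mul_of_nonneg_left (le_add_of_nonneg_right (by positivity)) hsub
  have hAB := mul_weighted_sum_sq_le_binary_form hsub (by positivity) (by positivity) hweights A B
  have hG : (1 + μ) / 6 * ((Xu + Xr * (1 - μ)) * G ^ 2) ≤
      1 / 2 * ((Xu + Xr * (1 - μ)) * G ^ 2) :=
    mul_le_mul_of_nonneg_right (by linarith) (by positivity)
  have hD' : (1 + μ) / 6 * D ≤ D := mul_le_of_le_one_left hD (by linarith)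
  unfold fluxDensity fluxSumSq
  linear_combination hAB + hG + hD'

theorem fluxDensity_le_mul_fluxSumSq (hXu : 0 ≤ Xu) (hXr : 0 ≤ Xr) (hμ : μ ∈ Icc (-1) 1)
    (hD : 0 ≤ D) (A B G : R) :
    fluxDensity Xu Xr μ A B G D ≤ 3 / 2 * fluxSumSq Xu Xr μ A B G D := by
  have hsub : 0 ≤ 1 - μ := sub_nonneg.mpr hμ.2
  have hadd : 0 ≤ 1 + μ := neg_le_iff_add_nonneg'.mp hμ.1
  have hweights : Xu * (1 - μ) ≤ 2 * (Xu + Xr * (1 + μ)) := by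
    have : 0 ≤ (Xu + 2 * Xr) * (1 + μ) := by positivity
    linear_combination this
  have hAB := binary_form_le_mul_weighted_sum_sq (by positivity) hweights A B
  have hG : 0 ≤ (Xu + Xr * (1 - μ)) * G ^ 2 := by positivity
  unfold fluxDensity fluxSumSq
  linear_combination hAB + hG + 1 / 2 * hD

end Flux

theorem flux_density_coercive_general {μ₀ : R} (hμ₀ : -1 < μ₀) :
    ∃ c C : R, 0 < c ∧ 0 < C ∧
      ∀ Xu Xr μ A B G D : R, 0 ≤ Xu → 0 ≤ Xr → μ ∈ Icc μ₀ 1 → 0 ≤ D →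
        c * fluxSumSq Xu Xr μ A B G D ≤ fluxDensity Xu Xr μ A B G D ∧
          fluxDensity Xu Xr μ A B G D ≤ C * fluxSumSq Xu Xr μ A B G D := by
  refine ⟨(1 + μ₀) / 6, 3 / 2, by linarith, by norm_num, ?_⟩
  intro Xu Xr μ A B G D hXu hXr hμ hD
  have hμ' : μ ∈ Icc (-1) 1 := Icc_subset_Icc_left hμ₀.le hμ
  refine ⟨?_, fluxDensity_le_mul_fluxSumSq hXu hXr hμ' hD A B G⟩
  calc (1 + μ₀) / 6 * fluxSumSq Xu Xr μ A B G D
      ≤ (1 + μ) / 6 * fluxSumSq Xu Xr μ A B G D :=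
        mul_le_mul_of_nonneg_right (by linarith [hμ.1]) (fluxSumSq_nonneg hXu hXr hμ' hD A B G)
    _ ≤ fluxDensity Xu Xr μ A B G D := mul_fluxSumSq_le_fluxDensity hXu hXr hμ' hD A B G

end OrderedField

/-- Coercivity of the flux density: two-sided comparison between the flux quadratic
form and a sum of squares. -/
theorem flux_density_coercive :
    ∃ c C : ℝ, 0 < c ∧ 0 < C ∧
      ∀ Xu Xr μ A B G D : ℝ, 0 ≤ Xu → 0 ≤ Xr → μ ∈ Set.Ico (0:ℝ) 1 → 0 ≤ D →
        c * (Xu * (1-μ) * A^2 + (Xu + Xr * (1+μ)) * B^2 + (Xu + Xr * (1-μ)) * G^2 + D)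
          ≤ Xu * (1-μ) * A^2 + (1/2) * (Xu + Xr * (1+μ)) * B^2 - Xu * (1-μ) * A * B
            + (1/2) * (Xu + Xr * (1-μ)) * G^2 + D
        ∧ Xu * (1-μ) * A^2 + (1/2) * (Xu + Xr * (1+μ)) * B^2 - Xu * (1-μ) * A * B
            + (1/2) * (Xu + Xr * (1-μ)) * G^2 + D
          ≤ C * (Xu * (1-μ) * A^2 + (Xu + Xr * (1+μ)) * B^2 + (Xu + Xr * (1-μ)) * G^2 + D) := by
  obtain ⟨c, C, hc, hC, h⟩ := flux_density_coercive_general (neg_one_lt_zero (R := ℝ))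
  exact ⟨c, C, hc, hC, fun Xu Xr μ A B G D hXu hXr hμ hD ↦
    h Xu Xr μ A B G D hXu hXr (Ico_subset_Icc_self hμ) hD⟩
end
end
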